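/- arXiv:2202.13725 — 3 statements merged into one kernel-verified Lean document; each statement's English description precedes it below -/
import Mathlib

section
/- For every n ≥ 1, the set GL⁺ₙ(ℝ) = {A ∈ Matₙₓₙ(ℝ) : det A > 0}, endowed with the Frobenius (Euclidean) norm on the space of matrices, is Lipschitz Normally Embedded. -/
/-!
The proof is an induction on the size of the matrices, by one step of Gaussian elimination.

All estimates are made entrywise, and curves of finite length are replaced by Lipschitz curves on
`[0, 1]` whose Lipschitz constant controls the length (`LipJoined`). The inductive claim for an index
type `ι` is `EntryLNE ι K`: two matrices of positive determinant whose entries differ by at most `ε`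
are joined, inside `{det > 0}`, by a curve of Lipschitz constant `K * ε`.

*Elimination step* (`EntryLNE.joined_of_pivot`). Write a matrix as a pivot `a > 0`, a column `c`, a row
`r` and a remaining block, and let `S` be its Schur complement, so that `det = a * det S`. On the convex
cone where the entries of `c` and `r` are at most `L * a`, the expression `c * r / a` is a Lipschitz
function of `(a, c, r)`. For two matrices in this cone the Schur complements are therefore as close as
the matrices; interpolating `(a, c, r)` linearly and `S` by the inductive hypothesis gives a curve of
the required length.

*Creating a pivot* (`exists_good_pivot`). There is a constant `C` such that every `A` can be multiplied
by products of transvections `P`, `Q`, bounded together with their inverses by `C` and connected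
to `1` in `{det = 1}` by curves bounded by `C`, so that the pivot of `P * A * Q` dominates all entries
of `A`. Let `a` be that pivot. If `a` is large compared with `ε`, the same `P` and `Q` bring `B` into
the cone as well, and the curve from `P * A * Q` to `P * B * Q` is pulled back. If `a` is at most a
multiple of `ε`, then both matrices are of size `O(ε)`, so each can be moved into the cone along the
curves of transvections at a cost `O(ε)`.
-/

open scoped ENNReal

/-- The inner distance on a subset `X` of a (pseudo-e)metric space: the infimum of the
lengths (total variations) of continuous paths `γ : [0,1] → X` joining `x` to `y`. -/
noncomputable def innerDist {E : Type*} [PseudoEMetricSpace E] (X : Set E) (x y : E) : ℝ≥0∞ :=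
  ⨅ (γ : ℝ → E) (_ : ContinuousOn γ (Set.Icc 0 1))
    (_ : Set.MapsTo γ (Set.Icc 0 1) X) (_ : γ 0 = x) (_ : γ 1 = y),
    eVariationOn γ (Set.Icc 0 1)

/-- A subset `X` of a normed space is Lipschitz Normally Embedded (LNE) if there is a
constant `K ≥ 1` such that `d_i(x,y) ≤ K‖x − y‖` for all `x, y ∈ X`. -/
def IsLNE {E : Type*} [NormedAddCommGroup E] (X : Set E) : Prop :=
  ∃ K : ℝ, 1 ≤ K ∧ ∀ x ∈ X, ∀ y ∈ X, innerDist X x y ≤ ENNReal.ofReal (K * ‖x - y‖)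

attribute [local instance] Matrix.frobeniusNormedAddCommGroup

open Matrix

/-! ### Lipschitz curves of matrices of positive determinant -/

/-- `A` and `B` are joined inside `{det > 0}` by a curve on `[0, 1]` all of whose entries are
`L`-Lipschitz. Only ordered pairs of times are compared, which avoids absolute values of times. -/
def LipJoined {κ : Type} [Fintype κ] [DecidableEq κ] (L : ℝ) (A B : Matrix κ κ ℝ) : Prop :=
  ∃ γ : ℝ → Matrix κ κ ℝ, γ 0 = A ∧ γ 1 = B ∧
    (∀ t, 0 ≤ t → t ≤ 1 → 0 < (γ t).det) ∧
    ∀ s t, 0 ≤ s → s ≤ t → t ≤ 1 → ∀ i j, |γ t i j - γ s i j| ≤ L * (t - s)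

/-- The entrywise form of the LNE property of `{det > 0}` for matrices indexed by `κ`. -/
def EntryLNE (κ : Type) [Fintype κ] [DecidableEq κ] (K : ℝ) : Prop :=
  0 ≤ K ∧ ∀ (A B : Matrix κ κ ℝ) (ε : ℝ), 0 < A.det → 0 < B.det → 0 ≤ ε →
    (∀ i j, |B i j - A i j| ≤ ε) → LipJoined (K * ε) A B

section General

variable {κ : Type} [Fintype κ] [DecidableEq κ]

lemma LipJoined.mono {L L' : ℝ} {A B : Matrix κ κ ℝ} (h : LipJoined L A B) (hL : L ≤ L') :
    LipJoined L' A B := by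
  obtain ⟨γ, h0, h1, hd, hl⟩ := h
  refine ⟨γ, h0, h1, hd, fun s t hs hst ht i j => (hl s t hs hst ht i j).trans ?_⟩
  exact mul_le_mul_of_nonneg_right hL (by linarith)

lemma LipJoined.symm {L : ℝ} {A B : Matrix κ κ ℝ} (h : LipJoined L A B) : LipJoined L B A := by
  obtain ⟨γ, h0, h1, hd, hl⟩ := h
  refine ⟨fun t => γ (1 - t), by simpa using h1, by simpa using h0,
    fun t h0 h1 => hd _ (by linarith) (by linarith), fun s t hs hst ht i j => ?_⟩
  have := hl (1 - t) (1 - s) (by linarith) (by linarith) (by linarith) i j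
  rw [abs_sub_comm]
  calc _ ≤ _ := this
    _ = _ := by ring

lemma LipJoined.trans {L : ℝ} {A B D : Matrix κ κ ℝ} (h : LipJoined L A B)
    (h' : LipJoined L B D) : LipJoined (2 * L) A D := by
  obtain ⟨γ, h0, h1, hd, hl⟩ := h
  obtain ⟨γ', h0', h1', hd', hl'⟩ := h'
  refine ⟨fun t => if t ≤ 1 / 2 then γ (2 * t) else γ' (2 * t - 1), ?_, ?_, ?_, ?_⟩
  · norm_num [h0]
  · norm_num [h1']
  · intro t ht0 ht1
    dsimp only
    split_ifs with h
    · exact hd _ (by linarith) (by linarith)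
    · exact hd' _ (by linarith) (by linarith)
  · intro s t hs hst ht i j
    dsimp only
    split_ifs with h1t h1s h1s
    · have := hl (2 * s) (2 * t) (by linarith) (by linarith) (by linarith) i j
      linarith
    · linarith
    · have e1 := hl (2 * s) 1 (by linarith) (by linarith) (by linarith) i j
      have e2 := hl' 0 (2 * t - 1) (by linarith) (by linarith) (by linarith) i j
      rw [h1] at e1
      rw [h0'] at e2
      have := abs_sub_le (γ' (2 * t - 1) i j) (B i j) (γ (2 * s) i j)
      linarith
    · have := hl' (2 * s - 1) (2 * t - 1) (by linarith) (by linarith) (by linarith) i j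
      linarith

lemma EntryLNE.of_equiv {κ' : Type} [Fintype κ'] [DecidableEq κ'] {K : ℝ} (e : κ ≃ κ')
    (h : EntryLNE κ K) : EntryLNE κ' K := by
  refine ⟨h.1, fun A B ε hA hB hε hAB => ?_⟩
  obtain ⟨γ, h0, h1, hd, hl⟩ := h.2 (A.submatrix e e) (B.submatrix e e) ε
    (by rwa [det_submatrix_equiv_self]) (by rwa [det_submatrix_equiv_self]) hε
    (fun i j => hAB _ _)
  refine ⟨fun t => (γ t).submatrix e.symm e.symm, ?_, ?_, fun t ht ht' => ?_,
    fun s t hs hst ht i j => hl s t hs hst ht _ _⟩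
  · simp [h0]
  · simp [h1]
  · rw [det_submatrix_equiv_self]
    exact hd t ht ht'

omit [DecidableEq κ] in
lemma abs_mul_entry_le {M N : Matrix κ κ ℝ} {m n : ℝ} (hM : ∀ i j, |M i j| ≤ m)
    (hN : ∀ i j, |N i j| ≤ n) (i j : κ) : |(M * N) i j| ≤ Fintype.card κ * (m * n) := by
  rw [mul_apply]
  refine (Finset.abs_sum_le_sum_abs _ _).trans ?_
  calc _ ≤ ∑ _k : κ, m * n := Finset.sum_le_sum fun k _ => by
        rw [abs_mul]
        exact mul_le_mul (hM _ _) (hN _ _) (abs_nonneg _) ((abs_nonneg _).trans (hM i k))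
    _ = _ := by simp

omit [DecidableEq κ] in
lemma abs_mul_mul_entry_le {P X Q : Matrix κ κ ℝ} {p x q : ℝ} (hP : ∀ i j, |P i j| ≤ p)
    (hX : ∀ i j, |X i j| ≤ x) (hQ : ∀ i j, |Q i j| ≤ q) (i j : κ) :
    |(P * X * Q) i j| ≤ Fintype.card κ ^ 2 * (p * q) * x := by
  calc _ ≤ Fintype.card κ * ((Fintype.card κ * (p * x)) * q) :=
        abs_mul_entry_le (abs_mul_entry_le hP hX) hQ i j
    _ = _ := by ring

/-! ### Curves of matrices of determinant one -/

/-- `M` is the endpoint of a curve in `{det = 1}` starting at `1`, whose entries are `C`-Lipschitz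
and bounded by `C`; the entries of `M⁻¹` are bounded by `C` as well. -/
def Good (C : ℝ) (M : Matrix κ κ ℝ) : Prop :=
  (∀ i j, |M⁻¹ i j| ≤ C) ∧ ∃ w : ℝ → Matrix κ κ ℝ, w 0 = 1 ∧ w 1 = M ∧ (∀ t, (w t).det = 1) ∧
    (∀ t, 0 ≤ t → t ≤ 1 → ∀ i j, |w t i j| ≤ C) ∧
    ∀ s t, 0 ≤ s → s ≤ t → t ≤ 1 → ∀ i j, |w t i j - w s i j| ≤ C * (t - s)

lemma Good.mono {C C' : ℝ} {M : Matrix κ κ ℝ} (h : Good C M) (hC : C ≤ C') : Good C' M := by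
  obtain ⟨hi, w, h0, h1, hd, hb, hl⟩ := h
  refine ⟨fun i j => (hi i j).trans hC, w, h0, h1, hd, fun t a b i j => (hb t a b i j).trans hC,
    fun s t a b c i j => (hl s t a b c i j).trans ?_⟩
  exact mul_le_mul_of_nonneg_right hC (by linarith)

lemma Good.transpose {C : ℝ} {M : Matrix κ κ ℝ} (h : Good C M) : Good C Mᵀ := by
  obtain ⟨hi, w, h0, h1, hd, hb, hl⟩ := h
  refine ⟨fun i j => ?_, fun t => (w t)ᵀ, by simp [h0], by simp [h1],
    fun t => by rw [det_transpose, hd], fun t a b i j => hb t a b j i,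
    fun s t a b c i j => hl s t a b c j i⟩
  rw [← transpose_nonsing_inv]
  exact hi j i

lemma Good.abs_le {C : ℝ} {M : Matrix κ κ ℝ} (h : Good C M) (i j : κ) : |M i j| ≤ C := by
  obtain ⟨hi, w, h0, h1, hd, hb, hl⟩ := h
  rw [← h1]
  exact hb 1 zero_le_one le_rfl i j

lemma Good.det_eq {C : ℝ} {M : Matrix κ κ ℝ} (h : Good C M) : M.det = 1 := by
  obtain ⟨hi, w, h0, h1, hd, hb, hl⟩ := h
  rw [← h1, hd]

lemma exists_good_mul {M N : Matrix κ κ ℝ} (hM : ∃ C, Good C M) (hN : ∃ C, Good C N) :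
    ∃ C, Good C (M * N) := by
  obtain ⟨C, hi, w, h0, h1, hd, hb, hl⟩ := hM
  obtain ⟨C', hi', w', h0', h1', hd', hb', hl'⟩ := hN
  refine ⟨max (Fintype.card κ * (C' * C)) (Fintype.card κ * (C * C') + Fintype.card κ * (C * C')),
    fun i j => ?_, fun t => w t * w' t, by simp [h0, h0'], by simp [h1, h1'],
    fun t => by simp [hd, hd'], fun t a b i j => ?_, fun s t a b c i j => ?_⟩
  · rw [Matrix.mul_inv_rev]
    exact (abs_mul_entry_le hi' hi i j).trans (le_max_left _ _)
  · refine (abs_mul_entry_le (hb t a b) (hb' t a b) i j).trans ((le_max_left _ _).trans' ?_)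
    rw [mul_comm C]
  · have e : w t * w' t - w s * w' s = (w t - w s) * w' t + w s * (w' t - w' s) := by
      noncomm_ring
    have e1 := abs_mul_entry_le (M := w t - w s) (hl s t a b c) (hb' t (a.trans b) c) i j
    have e2 := abs_mul_entry_le (N := w' t - w' s) (hb s a (b.trans c)) (hl' s t a b c) i j
    rw [← Matrix.sub_apply, e, Matrix.add_apply]
    refine (abs_add_le _ _).trans ((add_le_add e1 e2).trans ?_)
    calc _ = (Fintype.card κ * (C * C') + Fintype.card κ * (C * C')) * (t - s) := by ring
      _ ≤ _ := mul_le_mul_of_nonneg_right (le_max_right _ _) (by linarith)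

lemma exists_good_transvection {i j : κ} (hij : i ≠ j) (c : ℝ) :
    ∃ C, Good C (transvection i j c) := by
  have hent : ∀ (x : ℝ) (k l : κ), |single i j x k l| ≤ |x| := by
    intro x k l
    rw [single_apply]
    split_ifs <;> simp
  have hb : ∀ (x : ℝ) (k l : κ), |transvection i j x k l| ≤ 1 + |x| := by
    intro x k l
    rw [transvection, Matrix.add_apply]
    refine (abs_add_le _ _).trans (add_le_add ?_ (hent x k l))
    rw [one_apply]
    split_ifs <;> simp
  have hinv : (transvection i j c)⁻¹ = transvection i j (-c) := by
    apply inv_eq_left_inv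
    rw [transvection_mul_transvection_same _ _ hij]
    simp
  refine ⟨1 + |c|, fun k l => ?_, fun t => transvection i j (t * c), by simp, by simp,
    fun t => det_transvection_of_ne _ _ hij _, fun t h0 h1 k l => ?_, fun s t hs hst ht k l => ?_⟩
  · rw [hinv]
    simpa using hb (-c) k l
  · refine (hb _ k l).trans ?_
    rw [abs_mul, abs_of_nonneg h0]
    nlinarith [abs_nonneg c]
  · have : transvection i j (t * c) - transvection i j (s * c) = single i j ((t - s) * c) := by
      ext k l
      simp only [transvection, Matrix.sub_apply, Matrix.add_apply, single_apply]
      split_ifs <;> ring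
    rw [← Matrix.sub_apply, this]
    refine (hent _ k l).trans ?_
    rw [abs_mul, abs_of_nonneg (by linarith : 0 ≤ t - s)]
    nlinarith

/-- A product of two transvections sends the row `i` of the identity to `s` times the row `j`. -/
lemma exists_good_row_of_ne {i j : κ} (hij : i ≠ j) {s : ℝ} (hs : s * s = 1) :
    ∃ M : Matrix κ κ ℝ, (∃ C, Good C M) ∧ M i = Pi.single j s := by
  refine ⟨_, exists_good_mul (exists_good_transvection hij s)
    (exists_good_transvection hij.symm (-s)), ?_⟩
  ext k
  rw [transvection, transvection, add_mul, one_mul, Matrix.add_apply,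
    single_mul_apply_same]
  simp only [Matrix.add_apply, one_apply, single_apply, Pi.single_apply]
  by_cases h1 : j = k <;> by_cases h2 : i = k <;> simp_all <;> grind

lemma exists_good_row [Nontrivial κ] (o i : κ) {s : ℝ} (hs : s * s = 1) :
    ∃ M : Matrix κ κ ℝ, (∃ C, Good C M) ∧ M o = Pi.single i s := by
  by_cases h : o = i
  · subst h
    obtain ⟨k, hk⟩ := exists_ne o
    obtain ⟨M, hM, hMr⟩ := exists_good_row_of_ne hk.symm (s := 1) (by norm_num)
    obtain ⟨N, hN, hNr⟩ := exists_good_row_of_ne hk hs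
    refine ⟨M * N, exists_good_mul hM hN, ?_⟩
    rw [mul_apply_eq_vecMul, hMr, single_one_vecMul]
    exact hNr
  · exact exists_good_row_of_ne h hs

/-- Up to bounded factors of determinant one, the entry `(o, o)` dominates all entries. -/
lemma exists_good_pivot [Nontrivial κ] (o : κ) :
    ∃ C : ℝ, 1 ≤ C ∧ ∀ A : Matrix κ κ ℝ, ∃ P Q : Matrix κ κ ℝ, Good C P ∧ Good C Q ∧
      ∀ i j, |A i j| ≤ ((P * A * Q : Matrix κ κ ℝ) o o) := by
  have key : ∀ x : κ × Bool, ∃ M : Matrix κ κ ℝ, ∃ C, Good C M ∧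
      M o = Pi.single x.1 (if x.2 then 1 else -1) := by
    intro x
    obtain ⟨M, ⟨C, hC⟩, hM⟩ := exists_good_row o x.1 (s := if x.2 then 1 else -1)
      (by split_ifs <;> norm_num)
    exact ⟨M, C, hC, hM⟩
  choose M c hc hM using key
  -- The family `M` is finite, so a common constant exists.
  obtain ⟨C, hC⟩ := (Set.finite_range c).bddAbove
  have hgood : ∀ x, Good (max 1 C) (M x) := fun x =>
    (hc x).mono ((hC ⟨x, rfl⟩).trans (le_max_right _ _))
  refine ⟨max 1 C, le_max_left _ _, fun A => ?_⟩
  have : Nonempty κ := ⟨o⟩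
  obtain ⟨⟨i, j⟩, hmax⟩ := Finite.exists_max (fun x : κ × κ => |A x.1 x.2|)
  refine ⟨M (i, true), (M (j, decide (0 ≤ A i j)))ᵀ, hgood _, (hgood _).transpose, fun k l => ?_⟩
  have e : (M (i, true) * A * (M (j, decide (0 ≤ A i j)))ᵀ) o o = |A i j| := by
    have e1 : (M (i, true) * A) o = A i := by
      rw [mul_apply_eq_vecMul, hM]
      simp [Matrix.row]
    rw [mul_apply]
    simp only [e1, transpose_apply, hM]
    simp only [Pi.single_apply, mul_ite, mul_zero, Finset.sum_ite_eq', Finset.mem_univ, if_true]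
    by_cases h : 0 ≤ A i j
    · simp [h, abs_of_nonneg h]
    · simp [h, abs_of_neg (not_le.1 h)]
  rw [e]
  exact hmax (k, l)

lemma LipJoined.mul_mul {L p q : ℝ} {A B P Q : Matrix κ κ ℝ} (h : LipJoined L A B)
    (hP : ∀ i j, |P i j| ≤ p) (hQ : ∀ i j, |Q i j| ≤ q) (hPd : 0 < P.det) (hQd : 0 < Q.det) :
    LipJoined (Fintype.card κ ^ 2 * (p * q) * L) (P * A * Q) (P * B * Q) := by
  obtain ⟨γ, h0, h1, hd, hl⟩ := h
  refine ⟨fun t => P * γ t * Q, by simp [h0], by simp [h1], fun t a b => ?_,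
    fun s t a b c i j => ?_⟩
  · rw [det_mul, det_mul]
    have := hd t a b
    positivity
  · have e : P * γ t * Q - P * γ s * Q = P * (γ t - γ s) * Q := by noncomm_ring
    rw [← Matrix.sub_apply, e, mul_assoc _ L]
    exact abs_mul_mul_entry_le hP (X := γ t - γ s) (hl s t a b c) hQ i j

lemma LipJoined.of_good {C x : ℝ} {A P Q : Matrix κ κ ℝ} (hA : 0 < A.det)
    (hx : ∀ i j, |A i j| ≤ x) (hP : Good C P) (hQ : Good C Q) :
    LipJoined (2 * (Fintype.card κ ^ 2 * (C * C) * x)) A (P * A * Q) := by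
  obtain ⟨-, w, h0, h1, hd, hb, hl⟩ := hP
  obtain ⟨-, w', h0', h1', hd', hb', hl'⟩ := hQ
  refine ⟨fun t => w t * A * w' t, by simp [h0, h0'], by simp [h1, h1'],
    fun t _ _ => by simpa [hd, hd'] using hA, fun s t a b c i j => ?_⟩
  have e : w t * A * w' t - w s * A * w' s = (w t - w s) * A * w' t + w s * A * (w' t - w' s) := by
    noncomm_ring
  dsimp only
  rw [← Matrix.sub_apply, e, Matrix.add_apply]
  have e1 := abs_mul_mul_entry_le (P := w t - w s) (hl s t a b c) hx (hb' t (a.trans b) c) i j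
  have e2 := abs_mul_mul_entry_le (Q := w' t - w' s) (hb s a (b.trans c)) hx (hl' s t a b c) i j
  refine (abs_add_le _ _).trans ((add_le_add e1 e2).trans (le_of_eq ?_))
  ring

end General

/-! ### The elimination step -/

/-- The map `(a, x, y) ↦ x * y / a` is Lipschitz on the cone `|x|, |y| ≤ L * a`. -/
lemma abs_mul_div_sub_le {a b x x' y y' L δ : ℝ} (ha : 0 < a) (hb : 0 < b)
    (hx : |x| ≤ L * a) (hy' : |y'| ≤ L * b)
    (hab : |b - a| ≤ δ) (hxx : |x' - x| ≤ δ) (hyy : |y' - y| ≤ δ) :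
    |x' * y' / b - x * y / a| ≤ (2 * L + L ^ 2) * δ := by
  have hu : |x / a| ≤ L := by rwa [abs_div, abs_of_pos ha, div_le_iff₀ ha]
  have hv : |y' / b| ≤ L := by rwa [abs_div, abs_of_pos hb, div_le_iff₀ hb]
  have hL : 0 ≤ L := (abs_nonneg _).trans hu
  have e : x' * y' / b - x * y / a =
      (x' - x) * (y' / b) - x / a * (b - a) * (y' / b) + x / a * (y' - y) := by
    field_simp
    ring
  have h1 : |(x' - x) * (y' / b)| ≤ δ * L := by
    rw [abs_mul]; gcongr; exact (abs_nonneg _).trans hxx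
  have h2 : |x / a * (b - a) * (y' / b)| ≤ L * δ * L := by
    have hδ : 0 ≤ δ := (abs_nonneg _).trans hab
    rw [abs_mul, abs_mul]; gcongr
  have h3 : |x / a * (y' - y)| ≤ L * δ := by
    rw [abs_mul]; gcongr
  rw [e]
  refine (abs_add_le _ _).trans ?_
  have := abs_sub ((x' - x) * (y' / b)) (x / a * (b - a) * (y' / b))
  linarith

section Step

variable {ι : Type} [Fintype ι] [DecidableEq ι]

/-- The Schur complement of the entry indexed by `Sum.inl ()`. -/
noncomputable def schur (A : Matrix (Unit ⊕ ι) (Unit ⊕ ι) ℝ) : Matrix ι ι ℝ :=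
  fun i j => A (.inr i) (.inr j) - A (.inr i) (.inl ()) * A (.inl ()) (.inr j) /
    A (.inl ()) (.inl ())

lemma det_eq_schur (A : Matrix (Unit ⊕ ι) (Unit ⊕ ι) ℝ) (h : A (.inl ()) (.inl ()) ≠ 0) :
    A.det = A (.inl ()) (.inl ()) * (schur A).det := by
  have hdet : A.toBlocks₁₁.det = A (.inl ()) (.inl ()) := by simp [toBlocks₁₁]
  have hu : IsUnit A.toBlocks₁₁ := by
    rw [isUnit_iff_isUnit_det, hdet]
    exact h.isUnit
  let := hu.invertible
  conv_lhs => rw [← fromBlocks_toBlocks A]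
  rw [det_fromBlocks₁₁, hdet]
  congr 2
  ext i j
  have hinv : (⅟A.toBlocks₁₁) () () = (A (.inl ()) (.inl ()))⁻¹ := by
    rw [invOf_eq_nonsing_inv, inv_def, hdet, adjugate_subsingleton]
    simp
  simp only [schur, Matrix.sub_apply, mul_apply, Finset.univ_unique, Finset.sum_singleton]
  rw [hinv]
  simp only [toBlocks₁₂, toBlocks₂₁, toBlocks₂₂, of_apply]
  ring

/-- `A` lies in the cone where the pivot is positive and dominates, up to the factor `L`, the
remaining entries of its row and column. -/
def InCone (L : ℝ) (A : Matrix (Unit ⊕ ι) (Unit ⊕ ι) ℝ) : Prop :=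
  0 < A (.inl ()) (.inl ()) ∧ (∀ i, |A (.inr i) (.inl ())| ≤ L * A (.inl ()) (.inl ())) ∧
    ∀ j, |A (.inl ()) (.inr j)| ≤ L * A (.inl ()) (.inl ())

lemma EntryLNE.joined_of_pivot {K L ε : ℝ} (hK : EntryLNE ι K) (hL : 0 ≤ L) (hε : 0 ≤ ε)
    {A B : Matrix (Unit ⊕ ι) (Unit ⊕ ι) ℝ} (hA : 0 < A.det) (hB : 0 < B.det)
    (hAc : InCone L A) (hBc : InCone L B) (hAB : ∀ i j, |B i j - A i j| ≤ ε) :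
    LipJoined ((K + 1) * (1 + L) ^ 2 * ε) A B := by
  obtain ⟨ha, hAx, hAy⟩ := hAc
  obtain ⟨hb, hBx, hBy⟩ := hBc
  have hSA : 0 < (schur A).det := by
    rw [det_eq_schur A ha.ne'] at hA
    exact pos_of_mul_pos_right hA ha.le
  have hSB : 0 < (schur B).det := by
    rw [det_eq_schur B hb.ne'] at hB
    exact pos_of_mul_pos_right hB hb.le
  have hS : ∀ i j, |schur B i j - schur A i j| ≤ (1 + L) ^ 2 * ε := by
    intro i j
    have h1 := hAB (.inr i) (.inr j)
    have h2 := abs_mul_div_sub_le ha hb (hAx i) (hBy j) (hAB _ _) (hAB _ _) (hAB _ _)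
    have e : schur B i j - schur A i j = (B (.inr i) (.inr j) - A (.inr i) (.inr j)) -
      (B (.inr i) (.inl ()) * B (.inl ()) (.inr j) / B (.inl ()) (.inl ()) -
        A (.inr i) (.inl ()) * A (.inl ()) (.inr j) / A (.inl ()) (.inl ())) := by
      simp only [schur]; ring
    rw [e]
    refine (abs_sub _ _).trans ?_
    linarith
  obtain ⟨σ, h0, h1, hd, hl⟩ := hK.2 _ _ ((1 + L) ^ 2 * ε) hSA hSB (by positivity) hS
  have hK0 := hK.1
  -- Pivot, row and column move along the segment `F` from `A` to `B`.
  set F : ℝ → Matrix (Unit ⊕ ι) (Unit ⊕ ι) ℝ := fun t i j => A i j + t * (B i j - A i j) with hF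
  have hFlip : ∀ s t, s ≤ t → ∀ i j, |F t i j - F s i j| ≤ ε * (t - s) := by
    intro s t hst i j
    have : F t i j - F s i j = (B i j - A i j) * (t - s) := by simp only [hF]; ring
    rw [this, abs_mul, abs_of_nonneg (by linarith : 0 ≤ t - s)]
    exact mul_le_mul_of_nonneg_right (hAB i j) (by linarith)
  have hFpos : ∀ t, 0 ≤ t → t ≤ 1 → 0 < F t (.inl ()) (.inl ()) := by
    intro t h0 h1
    simp only [hF]
    rcases h0.eq_or_lt with rfl | h0
    · simpa using ha
    · nlinarith [mul_pos h0 hb, mul_nonneg (sub_nonneg.2 h1) ha.le]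
  have hFcone : ∀ t, 0 ≤ t → t ≤ 1 → ∀ i j, |A i j| ≤ L * A (.inl ()) (.inl ()) →
      |B i j| ≤ L * B (.inl ()) (.inl ()) → |F t i j| ≤ L * F t (.inl ()) (.inl ()) := by
    intro t h0 h1 i j hA hB
    have e : F t i j = (1 - t) * A i j + t * B i j := by simp only [hF]; ring
    rw [e]
    refine (abs_add_le _ _).trans ?_
    rw [abs_mul, abs_mul, abs_of_nonneg h0, abs_of_nonneg (sub_nonneg.2 h1)]
    have := mul_le_mul_of_nonneg_left hA (sub_nonneg.2 h1)
    have := mul_le_mul_of_nonneg_left hB h0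
    simp only [hF]
    linarith
  -- The remaining block is chosen so that the Schur complement of `G t` is `σ t`.
  set G : ℝ → Matrix (Unit ⊕ ι) (Unit ⊕ ι) ℝ := fun t => fromBlocks
    (F t).toBlocks₁₁ (F t).toBlocks₁₂ (F t).toBlocks₂₁ (of fun i j => σ t i j +
      F t (.inr i) (.inl ()) * F t (.inl ()) (.inr j) / F t (.inl ()) (.inl ())) with hG
  have hF0 : F 0 = A := by ext i j; simp [hF]
  have hF1 : F 1 = B := by ext i j; simp [hF]
  have hC1 : ε ≤ (K + 1) * (1 + L) ^ 2 * ε :=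
    le_mul_of_one_le_left hε (one_le_mul_of_one_le_of_one_le (by linarith)
      (one_le_pow₀ (by linarith)))
  refine ⟨G, ?_, ?_, ?_, ?_⟩
  · conv_rhs => rw [← fromBlocks_toBlocks A]
    simp only [hG, hF0, h0]
    congr 1
    ext i j
    simp [schur, toBlocks₂₂]
  · conv_rhs => rw [← fromBlocks_toBlocks B]
    simp only [hG, hF1, h1]
    congr 1
    ext i j
    simp [schur, toBlocks₂₂]
  · intro t ht0 ht1
    have hp := hFpos t ht0 ht1
    have e00 : G t (.inl ()) (.inl ()) = F t (.inl ()) (.inl ()) := rfl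
    rw [det_eq_schur _ (by rw [e00]; exact hp.ne'), e00]
    have : schur (G t) = σ t := by
      ext i j
      simp [schur, hG, toBlocks₁₁, toBlocks₁₂, toBlocks₂₁]
    rw [this]
    exact mul_pos hp (hd t ht0 ht1)
  · intro s t hs hst ht i j
    have hts : 0 ≤ t - s := by linarith
    have hsmall := fun i j => (hFlip s t hst i j).trans (mul_le_mul_of_nonneg_right hC1 hts)
    rcases i with ⟨⟩ | i
    · rcases j with ⟨⟩ | j <;> exact hsmall _ _
    rcases j with ⟨⟩ | j
    · exact hsmall _ _
    have q := abs_mul_div_sub_le (hFpos s hs (hst.trans ht)) (hFpos t (hs.trans hst) ht)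
      (hFcone s hs (hst.trans ht) _ _ (hAx i) (hBx i))
      (hFcone t (hs.trans hst) ht _ _ (hAy j) (hBy j))
      (hFlip s t hst _ _) (hFlip s t hst _ _) (hFlip s t hst _ _)
    have q' := hl s t hs hst ht i j
    simp only [hG, fromBlocks_apply₂₂, of_apply]
    rw [add_sub_add_comm]
    refine (abs_add_le _ _).trans ((add_le_add q' q).trans ?_)
    nlinarith [mul_nonneg hε hts]

omit [Fintype ι] [DecidableEq ι] in
/-- A matrix all of whose entries are at most `L` times its positive pivot lies in the cone. -/
lemma InCone.of_abs_le {L x : ℝ} {A : Matrix (Unit ⊕ ι) (Unit ⊕ ι) ℝ}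
    (h : ∀ i j, |A i j| ≤ x) (hp : 0 < A (.inl ()) (.inl ()))
    (hx : x ≤ L * A (.inl ()) (.inl ())) : InCone L A :=
  ⟨hp, fun _ => (h _ _).trans hx, fun _ => (h _ _).trans hx⟩

lemma pos_of_abs_entry_le {A : Matrix (Unit ⊕ ι) (Unit ⊕ ι) ℝ} {a : ℝ} (hA : 0 < A.det)
    (h : ∀ i j, |A i j| ≤ a) : 0 < a := by
  by_contra! ha
  have : A = 0 := by
    ext i j
    exact abs_nonpos_iff.1 ((h i j).trans ha)
  have : Nonempty (Unit ⊕ ι) := ⟨.inl ()⟩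
  rw [‹A = 0›, det_zero] at hA
  exact hA.false

lemma EntryLNE.step {K : ℝ} (hK : EntryLNE ι K) : ∃ K', EntryLNE (Unit ⊕ ι) K' := by
  have hK0 := hK.1
  cases isEmpty_or_nonempty ι with
  | inl hι =>
    -- In size one the determinant is the pivot, and the cone condition is void.
    refine ⟨(K + 1) * (1 + 0) ^ 2, by positivity, fun A B ε hA hB hε hAB => ?_⟩
    have hpos : ∀ M : Matrix (Unit ⊕ ι) (Unit ⊕ ι) ℝ, 0 < M.det → InCone 0 M := by
      intro M hM
      have : M.det = M (.inl ()) (.inl ()) := by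
        have : Subsingleton (Unit ⊕ ι) := ⟨by rintro (⟨⟩ | i) (⟨⟩ | j) <;>
          first | rfl | exact isEmptyElim ‹ι›⟩
        rw [det_eq_elem_of_subsingleton M (.inl ())]
      exact ⟨this ▸ hM, fun i => isEmptyElim i, fun i => isEmptyElim i⟩
    exact hK.joined_of_pivot le_rfl hε hA hB (hpos A hA) (hpos B hB) hAB
  | inr hι =>
    obtain ⟨i₀⟩ := id hι
    have : Nontrivial (Unit ⊕ ι) := ⟨.inl (), .inr i₀, by simp⟩
    obtain ⟨C, hC1, hC⟩ := exists_good_pivot (κ := Unit ⊕ ι) (.inl ())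
    set D : ℝ := Fintype.card (Unit ⊕ ι) ^ 2 * (C * C) with hD
    have hD1 : 1 ≤ D := by
      have : (1 : ℝ) ≤ Fintype.card (Unit ⊕ ι) := by exact_mod_cast Fintype.card_pos
      exact one_le_mul_of_one_le_of_one_le (one_le_pow₀ this)
        (one_le_mul_of_one_le_of_one_le hC1 hC1)
    set E : ℝ := (K + 1) * (1 + (2 * D + 1)) ^ 2 with hE
    have hE0 : 0 ≤ E := by positivity
    -- `D * E * D` serves the case of a large pivot, and the other summands the case of
    -- matrices of size `O(ε)`.
    set R : ℝ := 2 * (2 * (D * (2 * D + 1)) + E * (4 * D ^ 2 + D)) with hR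
    refine ⟨D * (E * D) + 2 * R, by positivity, fun A B ε hA hB hε hAB => ?_⟩
    obtain ⟨P, Q, hP, hQ, hPA⟩ := hC A
    set a := (P * A * Q) (.inl ()) (.inl ()) with ha_def
    have ha : 0 < a := pos_of_abs_entry_le hA hPA
    have hdet : ∀ {P Q M : Matrix (Unit ⊕ ι) (Unit ⊕ ι) ℝ}, Good C P → Good C Q → 0 < M.det →
        0 < (P * M * Q).det := by
      intro P Q M hP hQ hM
      simpa [hP.det_eq, hQ.det_eq] using hM
    have hPAQ : ∀ i j, |(P * A * Q) i j| ≤ D * a := abs_mul_mul_entry_le hP.abs_le hPA hQ.abs_le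
    have hBa : ∀ i j, |B i j| ≤ a + ε := by
      intro i j
      have := abs_sub_abs_le_abs_sub (B i j) (A i j)
      linarith [hAB i j, hPA i j]
    have hAcone : InCone (2 * D + 1) (P * A * Q) :=
      InCone.of_abs_le hPAQ ha (by rw [← ha_def]; nlinarith)
    rcases le_or_gt (2 * D * ε) a with hcase | hcase
    · have hdiff : ∀ i j, |(P * B * Q) i j - (P * A * Q) i j| ≤ D * ε := by
        intro i j
        have e : P * B * Q - P * A * Q = P * (B - A) * Q := by noncomm_ring
        rw [← Matrix.sub_apply, e]
        exact abs_mul_mul_entry_le hP.abs_le (X := B - A) hAB hQ.abs_le i j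
      have hb : a / 2 ≤ (P * B * Q) (.inl ()) (.inl ()) := by
        have := abs_le.1 (hdiff (.inl ()) (.inl ()))
        linarith [this.1]
      have hBcone : InCone (2 * D + 1) (P * B * Q) := by
        refine InCone.of_abs_le (x := D * (a + ε))
          (abs_mul_mul_entry_le hP.abs_le hBa hQ.abs_le) (by linarith) ?_
        have := mul_le_mul_of_nonneg_left hb (by positivity : 0 ≤ 2 * D + 1)
        linarith
      have hj := hK.joined_of_pivot (by positivity) (by positivity) (hdet hP hQ hA)
        (hdet hP hQ hB) hAcone hBcone hdiff
      have hdinv : ∀ {M : Matrix (Unit ⊕ ι) (Unit ⊕ ι) ℝ}, Good C M → 0 < M⁻¹.det := by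
        intro M hM
        simp [det_nonsing_inv, hM.det_eq]
      have hj' := hj.mul_mul hP.1 hQ.1 (hdinv hP) (hdinv hQ)
      have hcancel : ∀ M : Matrix (Unit ⊕ ι) (Unit ⊕ ι) ℝ, P⁻¹ * (P * M * Q) * Q⁻¹ = M := by
        intro M
        have h1 : P⁻¹ * P = 1 := nonsing_inv_mul _ (by simp [hP.det_eq])
        have h2 : Q * Q⁻¹ = 1 := mul_nonsing_inv _ (by simp [hQ.det_eq])
        calc _ = (P⁻¹ * P) * M * (Q * Q⁻¹) := by noncomm_ring
          _ = M := by rw [h1, h2]; simp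
      rw [hcancel, hcancel] at hj'
      refine hj'.mono ?_
      have : 0 ≤ R * ε := by positivity
      rw [← hD, ← hE]
      linarith
    · obtain ⟨P', Q', hP', hQ', hPB⟩ := hC B
      set b := (P' * B * Q') (.inl ()) (.inl ()) with hb_def
      have hb : 0 < b := pos_of_abs_entry_le hB hPB
      have hBcone : InCone (2 * D + 1) (P' * B * Q') := by
        refine InCone.of_abs_le (x := D * b)
          (abs_mul_mul_entry_le hP'.abs_le hPB hQ'.abs_le) hb ?_
        rw [← hb_def]
        nlinarith
      have hBε : ∀ i j, |B i j| ≤ (2 * D + 1) * ε := fun i j => (hBa i j).trans (by linarith)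
      have hAε : ∀ i j, |A i j| ≤ (2 * D + 1) * ε := fun i j => (hPA i j).trans (by linarith)
      have hB' : ∀ i j, |(P' * B * Q') i j| ≤ D * ((2 * D + 1) * ε) :=
        abs_mul_mul_entry_le hP'.abs_le hBε hQ'.abs_le
      have hdiff : ∀ i j, |(P' * B * Q') i j - (P * A * Q) i j| ≤ (4 * D ^ 2 + D) * ε := by
        intro i j
        refine (abs_sub _ _).trans ((add_le_add (hB' i j) (hPAQ i j)).trans ?_)
        have := mul_le_mul_of_nonneg_left hcase.le (by positivity : 0 ≤ D)
        linarith
      have hj := hK.joined_of_pivot (by positivity) (by positivity) (hdet hP hQ hA)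
        (hdet hP' hQ' hB) hAcone hBcone hdiff
      have hjA := LipJoined.of_good hA hAε hP hQ
      have hjB := (LipJoined.of_good hB hBε hP' hQ').symm
      rw [← hD] at hjA hjB
      rw [← hE] at hj
      have n1 : 0 ≤ 2 * (D * ((2 * D + 1) * ε)) := by positivity
      have n2 : 0 ≤ E * ((4 * D ^ 2 + D) * ε) := by positivity
      have n3 : 0 ≤ D * (E * D) * ε := by positivity
      set S : ℝ := 2 * (D * ((2 * D + 1) * ε)) + E * ((4 * D ^ 2 + D) * ε) with hS
      have t1 := (hjA.mono (by linarith : _ ≤ S)).trans (hj.mono (by linarith : _ ≤ S))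
      have t2 := t1.trans (hjB.mono (by linarith : _ ≤ 2 * S))
      refine t2.mono ?_
      rw [hS, hR]
      linarith

end Step

lemma exists_entryLNE (n : ℕ) : ∃ K, EntryLNE (Fin n) K := by
  induction n with
  | zero =>
    refine ⟨0, le_rfl, fun A B ε hA hB hε h => ⟨fun _ => A, rfl, Subsingleton.elim _ _,
      fun _ _ _ => hA, fun s t _ _ _ i => i.elim0⟩⟩
  | succ n ih =>
    obtain ⟨K, hK⟩ := ih
    obtain ⟨K', hK'⟩ := hK.step
    exact ⟨K', hK'.of_equiv (Fintype.equivFinOfCardEq (by simp [add_comm]))⟩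

/-! ### From entries to the Frobenius norm -/

lemma abs_entry_le_frobenius {n : ℕ} (A : Matrix (Fin n) (Fin n) ℝ) (i j : Fin n) :
    |A i j| ≤ ‖A‖ := by
  rw [frobenius_norm_def, ← Real.sqrt_eq_rpow]
  apply Real.abs_le_sqrt
  have h1 := Finset.single_le_sum (f := fun j => ‖A i j‖ ^ (2 : ℝ))
    (fun _ _ => by positivity) (Finset.mem_univ j)
  have h2 := Finset.single_le_sum (f := fun i => ∑ j, ‖A i j‖ ^ (2 : ℝ))
    (fun _ _ => by positivity) (Finset.mem_univ i)
  refine le_trans ?_ (h1.trans h2)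
  simp

lemma frobenius_le_of_abs_entry_le {n : ℕ} {A : Matrix (Fin n) (Fin n) ℝ} {x : ℝ} (hx : 0 ≤ x)
    (h : ∀ i j, |A i j| ≤ x) : ‖A‖ ≤ n * x := by
  rw [frobenius_norm_def, ← Real.sqrt_eq_rpow]
  apply Real.sqrt_le_iff.2 ⟨by positivity, ?_⟩
  calc _ ≤ ∑ _i : Fin n, ∑ _j : Fin n, x ^ 2 := by
        refine Finset.sum_le_sum fun i _ => Finset.sum_le_sum fun j _ => ?_
        have := h i j
        simp only [Real.rpow_two, Real.norm_eq_abs]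
        gcongr
    _ = _ := by simp; ring

theorem stmt5 (n : ℕ) (hn : 1 ≤ n) :
    IsLNE {A : Matrix (Fin n) (Fin n) ℝ | 0 < A.det} := by
  obtain ⟨K, hK0, hK⟩ := exists_entryLNE n
  refine ⟨n * K + 1, by linarith [mul_nonneg (Nat.cast_nonneg (α := ℝ) n) hK0],
    fun A hA B hB => ?_⟩
  obtain ⟨γ, h0, h1, hd, hl⟩ := hK A B ‖A - B‖ hA hB (norm_nonneg _) (fun i j => by
    rw [abs_sub_comm]
    exact abs_entry_le_frobenius (A - B) i j)
  set V : ℝ := n * K * ‖A - B‖ with hV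
  have hV0 : 0 ≤ V := by positivity
  have hnorm : ∀ s t, 0 ≤ s → s ≤ t → t ≤ 1 → ‖γ t - γ s‖ ≤ V * (t - s) := by
    intro s t hs hst ht
    have hts : 0 ≤ t - s := by linarith
    refine (frobenius_le_of_abs_entry_le (x := K * ‖A - B‖ * (t - s)) (by positivity)
      (hl s t hs hst ht)).trans (le_of_eq ?_)
    rw [hV]; ring
  have hlip : LipschitzOnWith (Real.toNNReal V) γ (Set.Icc 0 1) := by
    apply LipschitzOnWith.of_dist_le_mul
    intro s hs t ht
    rw [Real.coe_toNNReal _ hV0]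
    rcases le_total s t with h | h
    · rw [dist_comm, dist_eq_norm, dist_comm, Real.dist_eq, abs_of_nonneg (sub_nonneg.2 h)]
      exact hnorm s t hs.1 h ht.2
    · rw [dist_eq_norm, Real.dist_eq, abs_of_nonneg (sub_nonneg.2 h)]
      exact hnorm t s ht.1 h hs.2
  have hvar : eVariationOn γ (Set.Icc 0 1) ≤ ENNReal.ofReal V := by
    have h := hlip.comp_eVariationOn_le (g := id) (s := Set.Icc (0 : ℝ) 1) (fun x hx => hx)
    have hid : eVariationOn (id : ℝ → ℝ) (Set.Icc 0 1) ≤ ENNReal.ofReal (1 - 0) := by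
      simp
    refine h.trans ?_
    calc _ ≤ (Real.toNNReal V : ℝ≥0∞) * ENNReal.ofReal (1 - 0) := by gcongr
      _ = _ := by simp [ENNReal.ofReal]
  have hmaps : Set.MapsTo γ (Set.Icc 0 1) {A : Matrix (Fin n) (Fin n) ℝ | 0 < A.det} :=
    fun t ht => hd t ht.1 ht.2
  have hinner : innerDist {A : Matrix (Fin n) (Fin n) ℝ | 0 < A.det} A B ≤
      eVariationOn γ (Set.Icc 0 1) := by
    unfold innerDist
    refine (iInf_le _ γ).trans ?_
    simp [hlip.continuousOn, hmaps, h0, h1]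
  refine (hinner.trans hvar).trans ?_
  apply ENNReal.ofReal_le_ofReal
  rw [hV]
  nlinarith [norm_nonneg (A - B)]
end

section
/- Let n and k be positive integers with n ≥ k, and let (a₁,b₁),…,(a_k,b_k) be pairs of nonzero complex numbers such that the points (aᵢ : bᵢ) of ℙ¹(ℂ) are pairwise distinct (i.e., aᵢb_j − a_jbᵢ ≠ 0 for i ≠ j). Let X = {(x,y,z) ∈ ℂ³ : ∏_{i=1}^{k} (aᵢx + bᵢy) − zⁿ = 0}. Then the germ of X at the origin is Lipschitz Normally Embedded. -/
/-!
Write `F (x, y) = ∏ (aᵢ x + bᵢ y)`, a form of degree `k` in `w = (x, y)`, so that the surface is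
`F w = z ^ n`. Since the linear factors are pairwise independent, `F` has no critical point outside
`0`. The inverse function theorem, compactness of the unit sphere and homogeneity then give flow
boxes of size proportional to `‖p‖` at every `p ≠ 0`, with uniform bounds (`exists_hasBox`): small
paths of values of `F` lift to paths of comparable length.

The fibres `F = t`, `t ≠ 0`, are uniformly Lipschitz normally embedded (`exists_fib_lne`). Two
points of a fibre close to each other relative to their norm lie in a common flow box. For the other
ones it suffices that a point `w` of `F = 1` is joined to a base point by a path of length
`O(‖w‖)`, the other fibres being rescalings of this one. Far from the origin `F = 1` is
asymptotic to the cone `F = 0`, and `w` can be moved towards the origin by a definite proportion of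
`‖w‖` at a cost `O(‖w‖)` (`HasBox.descent_step`); the costs form a geometric series. What remains is
compact, and `F = 1` is connected (`form_fib_one_connected`) because the monodromy of the `k`-sheeted
cover `F = 1` of the `y / x`-line around one simple root of `F` permutes the sheets cyclically.

On the surface, consider two points `p = (w, z)` and `p' = (w', z')` with `|z|, |z'| < 1` at distance
`δ` (`surf_lne`). If `‖p‖ = O(δ)`, go through the origin along the orbits
`s ↦ (s ^ n w, s ^ k z)`. Otherwise move `z` to `z'` along a segment and lift it in the flow box at
`w`. The derivative of the lift is of order `|z| ^ (n - 1) / ‖w‖ ^ (k - 1)`. It is bounded when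
`|z| ≤ ‖w‖`, because `k ≤ n`; when `‖w‖ < |z|`, it is bounded because `|z| ^ n = O(‖w‖ ^ k)` on the
surface and `k ≤ n`. In the first case the lift can be made to end at `p'`; in the second one it ends
at some `(w'', z')` with `‖w'' - w‖ = O(δ)`, and the path is completed in the fibre
`F = z' ^ n ≠ 0`.
-/

open scoped ENNReal

/-! ### Inner distance -/

section InnerDist

open Set

lemma innerDist_le_eVariationOn {E : Type*} [PseudoEMetricSpace E] {X : Set E} {γ : ℝ → E}
    (hc : ContinuousOn γ (Icc 0 1)) (hm : MapsTo γ (Icc 0 1) X) :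
    innerDist X (γ 0) (γ 1) ≤ eVariationOn γ (Icc 0 1) :=
  iInf_le_of_le γ <| iInf_le_of_le hc <| iInf_le_of_le hm <| iInf_le_of_le rfl <|
    iInf_le_of_le rfl le_rfl

lemma le_innerDist {E : Type*} [PseudoEMetricSpace E] {X : Set E} {x y : E} {d : ℝ≥0∞}
    (h : ∀ γ : ℝ → E, ContinuousOn γ (Icc 0 1) → MapsTo γ (Icc 0 1) X → γ 0 = x → γ 1 = y →
      d ≤ eVariationOn γ (Icc 0 1)) : d ≤ innerDist X x y := by
  simp only [innerDist, le_iInf_iff]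
  exact h

/-- The inner distance is at most the Lipschitz constant of any path parametrized by `[0, 1]`; all
paths built below are bounded in this way. -/
lemma innerDist_le_of_lipschitz {E : Type*} [NormedAddCommGroup E] {X : Set E} {x y : E}
    {γ : ℝ → E} {L : ℝ}
    (hL : ∀ s ∈ Icc (0 : ℝ) 1, ∀ s' ∈ Icc (0 : ℝ) 1, ‖γ s - γ s'‖ ≤ L * |s - s'|)
    (hm : MapsTo γ (Icc 0 1) X) (h0 : γ 0 = x) (h1 : γ 1 = y) :
    innerDist X x y ≤ ENNReal.ofReal L := by
  have hl : LipschitzOnWith L.toNNReal γ (Icc 0 1) := by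
    refine LipschitzOnWith.of_dist_le_mul fun s hs s' hs' => ?_
    rw [dist_eq_norm, Real.dist_eq]
    refine (hL s hs s' hs').trans ?_
    gcongr
    exact Real.le_coe_toNNReal L
  subst h0 h1
  refine (innerDist_le_eVariationOn hl.continuousOn hm).trans ?_
  have := hl.comp_eVariationOn_le (g := (id : ℝ → ℝ)) (s := Icc 0 1) (fun x hx => hx)
  simpa [ENNReal.ofReal] using this

lemma innerDist_comm_le {E : Type*} [PseudoEMetricSpace E] (X : Set E) (x y : E) :
    innerDist X x y ≤ innerDist X y x := by
  refine le_innerDist fun γ hc hm h0 h1 => ?_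
  have hmap : MapsTo (fun s : ℝ => 1 - s) (Icc 0 1) (Icc 0 1) := fun s hs => by
    simp only [mem_Icc] at hs ⊢; constructor <;> linarith
  have hcont : ContinuousOn (γ ∘ fun s : ℝ => 1 - s) (Icc 0 1) :=
    hc.comp (by fun_prop) hmap
  have := innerDist_le_eVariationOn hcont (X := X) (hm.comp hmap)
  simp only [Function.comp, sub_zero, sub_self, h0, h1] at this
  exact this.trans (eVariationOn.comp_le_of_antitoneOn γ _
    (fun a _ b _ hab => by simpa using sub_le_sub_left hab 1) hmap)

lemma innerDist_comm {E : Type*} [PseudoEMetricSpace E] (X : Set E) (x y : E) :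
    innerDist X x y = innerDist X y x :=
  le_antisymm (innerDist_comm_le X x y) (innerDist_comm_le X y x)

lemma innerDist_triangle {E : Type*} [PseudoEMetricSpace E] (X : Set E) (x y z : E) :
    innerDist X x z ≤ innerDist X x y + innerDist X y z := by
  have key : ∀ γ : ℝ → E, ContinuousOn γ (Icc 0 1) → MapsTo γ (Icc 0 1) X → γ 0 = x → γ 1 = y →
      ∀ η : ℝ → E, ContinuousOn η (Icc 0 1) → MapsTo η (Icc 0 1) X → η 0 = y → η 1 = z →
      innerDist X x z ≤ eVariationOn γ (Icc 0 1) + eVariationOn η (Icc 0 1) := by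
    intro γ hγ mγ γ0 γ1 η hη mη η0 η1
    have m1 : MapsTo (fun s : ℝ => 2 * s) (Icc 0 (1 / 2)) (Icc 0 1) := fun s hs => by
      simp only [mem_Icc] at hs ⊢; constructor <;> linarith
    have m2 : MapsTo (fun s : ℝ => 2 * s - 1) (Icc (1 / 2) 1) (Icc 0 1) := fun s hs => by
      simp only [mem_Icc] at hs ⊢; constructor <;> linarith
    let θ : ℝ → E := fun s => if s ≤ 1 / 2 then γ (2 * s) else η (2 * s - 1)
    have e1 : EqOn θ (γ ∘ fun s : ℝ => 2 * s) (Icc 0 (1 / 2)) := fun s hs => by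
      simp [θ, hs.2, -one_div]
    have e2 : EqOn θ (η ∘ fun s : ℝ => 2 * s - 1) (Icc (1 / 2) 1) := fun s hs => by
      rcases hs.1.eq_or_lt with h | h
      · simp [θ, ← h, γ1, η0]
      · simp [θ, not_le.2 h, -one_div]
    have hU : Icc (0 : ℝ) (1 / 2) ∪ Icc (1 / 2) 1 = Icc 0 1 :=
      Icc_union_Icc_eq_Icc (by norm_num) (by norm_num)
    have cθ : ContinuousOn θ (Icc 0 1) := by
      rw [← hU]
      refine ContinuousOn.union_of_isClosed ?_ ?_ isClosed_Icc isClosed_Icc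
      · exact (hγ.comp (by fun_prop) m1).congr e1
      · exact (hη.comp (by fun_prop) m2).congr e2
    have mθ : MapsTo θ (Icc 0 1) X := by
      rw [← hU]
      rintro s (hs | hs)
      · rw [e1 hs]; exact mγ (m1 hs)
      · rw [e2 hs]; exact mη (m2 hs)
    have := innerDist_le_eVariationOn cθ mθ
    have t0 : θ 0 = x := by rw [e1 ⟨le_rfl, by norm_num⟩]; simp [γ0]
    have t1 : θ 1 = z := by
      rw [e2 ⟨by norm_num, le_rfl⟩, Function.comp, show (2 * 1 - 1 : ℝ) = 1 by norm_num, η1]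
    rw [t0, t1] at this
    refine this.trans ?_
    have hs := eVariationOn.Icc_add_Icc θ (s := univ) (a := 0) (b := 1 / 2) (c := 1)
      (by norm_num) (by norm_num) (mem_univ _)
    simp only [univ_inter] at hs
    rw [← hs, eVariationOn.congr e1, eVariationOn.congr e2]
    gcongr
    · exact eVariationOn.comp_le_of_monotoneOn γ _ (fun a _ b _ hab => by simpa using hab) m1
    · exact eVariationOn.comp_le_of_monotoneOn η _ (fun a _ b _ hab => by simpa using hab) m2
  conv_rhs => unfold innerDist
  simp only [ENNReal.iInf_add, ENNReal.add_iInf, le_iInf_iff]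
  intro η hη mη η0 η1 γ hγ mγ γ0 γ1
  exact key γ hγ mγ γ0 γ1 η hη mη η0 η1

lemma innerDist_image_le {E E' : Type*} [PseudoEMetricSpace E] [PseudoEMetricSpace E']
    {X : Set E} {Y : Set E'} {f : E → E'} {K : NNReal} (hf : LipschitzWith K f) (hK : K ≠ 0)
    (hXY : MapsTo f X Y) (x y : E) : innerDist Y (f x) (f y) ≤ K * innerDist X x y := by
  have key : ∀ γ : ℝ → E, ContinuousOn γ (Icc 0 1) → MapsTo γ (Icc 0 1) X → γ 0 = x → γ 1 = y →
      innerDist Y (f x) (f y) ≤ K * eVariationOn γ (Icc 0 1) := by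
    intro γ hγ mγ γ0 γ1
    have := innerDist_le_eVariationOn (X := Y) (hf.continuous.comp_continuousOn hγ)
      (hXY.comp mγ)
    simp only [Function.comp, γ0, γ1] at this
    exact this.trans ((hf.lipschitzOnWith (s := univ)).comp_eVariationOn_le (mapsTo_univ _ _))
  have h0 : (K : ℝ≥0∞) ≠ 0 := by exact_mod_cast hK
  rw [← ENNReal.div_le_iff' h0 ENNReal.coe_ne_top]
  refine le_innerDist fun γ hγ mγ γ0 γ1 => ?_
  rw [ENNReal.div_le_iff' h0 ENNReal.coe_ne_top]
  exact key γ hγ mγ γ0 γ1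

lemma innerDist_trans_le {E : Type*} [PseudoEMetricSpace E] {X : Set E} {x y z : E} {r s : ℝ}
    (hr : 0 ≤ r) (hs : 0 ≤ s) (h : innerDist X x y ≤ ENNReal.ofReal r)
    (h' : innerDist X y z ≤ ENNReal.ofReal s) : innerDist X x z ≤ ENNReal.ofReal (r + s) := by
  rw [ENNReal.ofReal_add hr hs]
  exact (innerDist_triangle X x y z).trans (add_le_add h h')

lemma innerDist_lt_top_trans {E : Type*} [PseudoEMetricSpace E] {X : Set E} {x y z : E}
    (h : innerDist X x y < ⊤) (h' : innerDist X y z < ⊤) : innerDist X x z < ⊤ :=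
  (innerDist_triangle X x y z).trans_lt (ENNReal.add_lt_top.2 ⟨h, h'⟩)

end InnerDist

/-! ### Binary forms -/

/-- The binary form `∏ i, (a i * x + b i * y)`, as a function on `ℂ × ℂ` with the sup norm. -/
def form {k : ℕ} (a b : Fin k → ℂ) (w : ℂ × ℂ) : ℂ := ∏ i, (a i * w.1 + b i * w.2)

section form

variable {k : ℕ} (a b : Fin k → ℂ)

lemma form_smul (c : ℂ) (w : ℂ × ℂ) : form a b (c • w) = c ^ k * form a b w := by
  simp only [form, Prod.smul_fst, Prod.smul_snd, smul_eq_mul]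
  have hc : c ^ k = ∏ _i : Fin k, c := by simp
  rw [hc, ← Finset.prod_mul_distrib]
  exact Finset.prod_congr rfl fun i _ => by ring

lemma form_bound : ∃ A : ℝ, 1 ≤ A ∧ ∀ w, ‖form a b w‖ ≤ A * ‖w‖ ^ k := by
  refine ⟨max 1 (∏ i, (‖a i‖ + ‖b i‖)), le_max_left _ _, fun w => ?_⟩
  have : ‖form a b w‖ ≤ (∏ i, (‖a i‖ + ‖b i‖)) * ‖w‖ ^ k := by
    rw [form, norm_prod]
    have : (∏ i, (‖a i‖ + ‖b i‖)) * ‖w‖ ^ k = ∏ i, ((‖a i‖ + ‖b i‖) * ‖w‖) := by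
      rw [Finset.prod_mul_distrib]; simp
    rw [this]
    refine Finset.prod_le_prod (fun _ _ => norm_nonneg _) fun i _ => ?_
    calc _ ≤ ‖a i‖ * ‖w.1‖ + ‖b i‖ * ‖w.2‖ := by
          simpa only [norm_mul] using norm_add_le (a i * w.1) (b i * w.2)
      _ ≤ ‖a i‖ * ‖w‖ + ‖b i‖ * ‖w‖ := by
          gcongr
          · exact norm_fst_le w
          · exact norm_snd_le w
      _ = _ := by ring
  exact this.trans (by gcongr; exact le_max_right _ _)

lemma form_contDiff : ContDiff ℂ 1 (form a b) := by
  unfold form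
  fun_prop

variable {a b}

/-- The form has no critical point outside the origin: off its zero set this is Euler's identity,
and on its zero set exactly one linear factor vanishes. -/
lemma form_fderiv_ne_zero (hk : 1 ≤ k) (hd : ∀ i j, i ≠ j → a i * b j - a j * b i ≠ 0)
    (h0 : ∀ i, a i ≠ 0)
    {w : ℂ × ℂ} (hw : w ≠ 0) : fderiv ℂ (form a b) w ≠ 0 := by
  have hdf : HasFDerivAt (form a b) (∑ i, (∏ j ∈ Finset.univ.erase i, (a j * w.1 + b j * w.2)) •
      (a i • ContinuousLinearMap.fst ℂ ℂ ℂ + b i • ContinuousLinearMap.snd ℂ ℂ ℂ)) w := by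
    refine HasFDerivAt.finsetProd fun i _ => ?_
    exact (hasFDerivAt_fst.const_mul (a i)).add (hasFDerivAt_snd.const_mul (b i))
  rw [hdf.fderiv]
  intro h
  by_cases hz : ∃ i, a i * w.1 + b i * w.2 = 0
  · obtain ⟨i, hi⟩ := hz
    have h1 := DFunLike.congr_fun h (1, 0)
    simp only [sum_apply, smul_apply,
      add_apply, ContinuousLinearMap.coe_fst', ContinuousLinearMap.coe_snd',
      smul_eq_mul, mul_one, mul_zero, add_zero, zero_apply] at h1
    rw [Finset.sum_eq_single i] at h1
    · rcases mul_eq_zero.1 h1 with h2 | h2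
      · obtain ⟨j, hj, hj0⟩ := Finset.prod_eq_zero_iff.1 h2
        have hij := hd i j (Finset.ne_of_mem_erase hj).symm
        apply hw
        ext
        · have : (a i * b j - a j * b i) * w.1 = 0 := by linear_combination b j * hi - b i * hj0
          simpa [hij] using this
        · have : (a i * b j - a j * b i) * w.2 = 0 := by linear_combination a i * hj0 - a j * hi
          simpa [hij] using this
      · exact h0 i h2
    · intro j _ hj
      rw [Finset.prod_eq_zero (Finset.mem_erase.2 ⟨hj.symm, Finset.mem_univ i⟩) hi, zero_mul]
    · simp
  · push Not at hz
    have h1 := DFunLike.congr_fun h w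
    simp only [sum_apply, smul_apply,
      add_apply, ContinuousLinearMap.coe_fst', ContinuousLinearMap.coe_snd',
      smul_eq_mul, zero_apply] at h1
    rw [Finset.sum_congr rfl fun i hi => Finset.prod_erase_mul _ _ hi] at h1
    simp only [Finset.sum_const, Finset.card_univ, Fintype.card_fin, nsmul_eq_mul,
      mul_eq_zero, Nat.cast_eq_zero] at h1
    rcases h1 with h1 | h1
    · omega
    · obtain ⟨i, _, hi⟩ := Finset.prod_eq_zero_iff.1 h1
      exact hz i hi

end form

/-! ### Flow boxes -/

section Flow

open Set

/-- `ω` has a flow box of size `c` and distortion `C` for `F`: a Lipschitz path `τ` of values of `F`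
near `F ω` lifts to a Lipschitz path with prescribed end points near `ω`, and a prescribed value
near `F ω` is attained near each point near `ω`. -/
def BoxAt (F : ℂ × ℂ → ℂ) (ω : ℂ × ℂ) (c C : ℝ) : Prop :=
  (∀ p ∈ Metric.ball ω c, ∀ q ∈ Metric.ball ω c, ∀ (τ : ℝ → ℂ) (L : ℝ),
    (∀ s ∈ Icc (0 : ℝ) 1, ∀ s' ∈ Icc (0 : ℝ) 1, ‖τ s - τ s'‖ ≤ L * |s - s'|) →
    τ 0 = F p → τ 1 = F q → (∀ s ∈ Icc (0 : ℝ) 1, ‖τ s - F ω‖ < c) →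
    ∃ γ : ℝ → ℂ × ℂ, (∀ s ∈ Icc (0 : ℝ) 1, ∀ s' ∈ Icc (0 : ℝ) 1,
        ‖γ s - γ s'‖ ≤ C * (L + ‖p - q‖) * |s - s'|) ∧
      γ 0 = p ∧ γ 1 = q ∧ ∀ s ∈ Icc (0 : ℝ) 1, F (γ s) = τ s) ∧
  (∀ p ∈ Metric.ball ω c, ∀ t, ‖t - F ω‖ < c → ∃ q, F q = t ∧ ‖q - p‖ ≤ C * ‖t - F p‖)

/-- The inverse function theorem for `w ↦ (F w, ℓ w)`, with `ℓ` a linear form independent of the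
differential `F'` of `F` at `ω`: paths are lifted with `ℓ` affine along them. -/
lemma boxAt_of_fderiv_ne_zero {F : ℂ × ℂ → ℂ} (hF : ContDiff ℂ 1 F) {ω : ℂ × ℂ}
    (hω : fderiv ℂ F ω ≠ 0) : ∃ c C : ℝ, 0 < c ∧ 0 ≤ C ∧ BoxAt F ω c C := by
  set F' := fderiv ℂ F ω with hF'
  set α := F' (1, 0) with hα
  set β := F' (0, 1) with hβ
  have hF'e : ∀ v : ℂ × ℂ, F' v = α * v.1 + β * v.2 := fun v => by
    have : v = v.1 • ((1 : ℂ), (0 : ℂ)) + v.2 • ((0 : ℂ), (1 : ℂ)) := by ext <;> simp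
    conv_lhs => rw [this]
    rw [map_add, map_smul, map_smul, smul_eq_mul, smul_eq_mul, mul_comm, mul_comm v.2]
  -- the pair of linear forms `(F', ℓ)` has determinant `|α| ^ 2 + |β| ^ 2`
  let ℓ : ℂ × ℂ →L[ℂ] ℂ := (starRingEnd ℂ α) • ContinuousLinearMap.snd ℂ ℂ ℂ -
    (starRingEnd ℂ β) • ContinuousLinearMap.fst ℂ ℂ ℂ
  have hℓe : ∀ v : ℂ × ℂ, ℓ v = starRingEnd ℂ α * v.2 - starRingEnd ℂ β * v.1 := fun v => by
    simp [ℓ]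
  have hdet : α * starRingEnd ℂ α + β * starRingEnd ℂ β ≠ 0 := by
    intro h
    rw [Complex.mul_conj, Complex.mul_conj, ← Complex.ofReal_add, Complex.ofReal_eq_zero] at h
    have h1 := Complex.normSq_nonneg α
    have h2 := Complex.normSq_nonneg β
    have h3 : α = 0 := Complex.normSq_eq_zero.1 (by linarith)
    have h4 : β = 0 := Complex.normSq_eq_zero.1 (by linarith)
    exact hω (by ext <;> simp [hF'e, h3, h4])
  let Φ' : ℂ × ℂ →L[ℂ] ℂ × ℂ := F'.prod ℓ
  have hinj : Function.Injective (Φ' : ℂ × ℂ →ₗ[ℂ] ℂ × ℂ) := by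
    rw [← LinearMap.ker_eq_bot, LinearMap.ker_eq_bot']
    intro v hv
    have h1 : F' v = 0 := congrArg Prod.fst hv
    have h2 : ℓ v = 0 := congrArg Prod.snd hv
    rw [hF'e] at h1
    rw [hℓe] at h2
    have e1 : (α * starRingEnd ℂ α + β * starRingEnd ℂ β) * v.1 = 0 := by
      linear_combination starRingEnd ℂ α * h1 - β * h2
    have e2 : (α * starRingEnd ℂ α + β * starRingEnd ℂ β) * v.2 = 0 := by
      linear_combination starRingEnd ℂ β * h1 + α * h2
    ext
    · simpa [hdet] using e1
    · simpa [hdet] using e2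
  let e : (ℂ × ℂ) ≃L[ℂ] (ℂ × ℂ) :=
    (LinearEquiv.ofInjectiveEndo (Φ' : ℂ × ℂ →ₗ[ℂ] ℂ × ℂ) hinj).toContinuousLinearEquiv
  have he : (e : ℂ × ℂ →L[ℂ] ℂ × ℂ) = Φ' := by ext <;> rfl
  let Φ : ℂ × ℂ → ℂ × ℂ := fun w => (F w, ℓ w)
  have hΦ : HasStrictFDerivAt Φ (e : ℂ × ℂ →L[ℂ] ℂ × ℂ) ω := by
    rw [he]
    exact (hF.contDiffAt.hasStrictFDerivAt (by simp)).prodMk ℓ.hasStrictFDerivAt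
  set g := hΦ.localInverse with hg
  obtain ⟨K, U, hU, hK⟩ := hΦ.to_localInverse.exists_lipschitzOnWith
  have hΦc : Continuous Φ := (hF.continuous).prodMk ℓ.continuous
  obtain ⟨r, hr, hrU⟩ := Metric.eventually_nhds_iff_ball.1
    (hΦ.eventually_right_inverse.and (show ∀ᶠ y in nhds (Φ ω), y ∈ U from hU))
  obtain ⟨c, hc, hcU⟩ := Metric.eventually_nhds_iff_ball.1
    (hΦ.eventually_left_inverse.and (hΦc.continuousAt.eventually (Metric.ball_mem_nhds (Φ ω) hr)))
  have lip : ∀ y ∈ Metric.ball (Φ ω) r, ∀ y' ∈ Metric.ball (Φ ω) r,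
      ‖g y - g y'‖ ≤ K * ‖y - y'‖ := fun y hy y' hy' => by
    simpa only [dist_eq_norm] using hK.dist_le_mul y (hrU y hy).2 y' (hrU y' hy').2
  refine ⟨min c r, K * (1 + ‖ℓ‖), lt_min hc hr, by positivity, ?_, ?_⟩
  · intro p hp q hq τ L hτ τ0 τ1 hτr
    have hp' := hcU p (Metric.ball_subset_ball (min_le_left _ _) hp)
    have hq' := hcU q (Metric.ball_subset_ball (min_le_left _ _) hq)
    let y : ℝ → ℂ × ℂ := fun s => (τ s, ℓ p + (s : ℂ) * (ℓ q - ℓ p))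
    have hy : ∀ s ∈ Icc (0 : ℝ) 1, y s ∈ Metric.ball (Φ ω) r := by
      intro s hs
      have h1 : (ℓ p + (s : ℂ) * (ℓ q - ℓ p)) ∈ Metric.ball (ℓ ω) r := by
        have hp2 : ℓ p ∈ Metric.ball (ℓ ω) r := lt_of_le_of_lt (le_max_right _ _) hp'.2
        have hq2 : ℓ q ∈ Metric.ball (ℓ ω) r := lt_of_le_of_lt (le_max_right _ _) hq'.2
        have := (convex_ball (ℓ ω) r).add_smul_sub_mem hp2 hq2 hs
        simpa using this
      have h2 : ‖τ s - F ω‖ < r := (hτr s hs).trans_le (min_le_right _ _)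
      rw [Metric.mem_ball, Prod.dist_eq]
      refine max_lt ?_ h1
      rwa [dist_eq_norm]
    have hL : 0 ≤ L := by
      have := hτ 0 ⟨le_rfl, zero_le_one⟩ 1 ⟨zero_le_one, le_rfl⟩
      simp at this
      exact (norm_nonneg _).trans this
    refine ⟨fun s => g (y s), fun s hs s' hs' => ?_, ?_, ?_, fun s hs => ?_⟩
    · refine (lip _ (hy s hs) _ (hy s' hs')).trans ?_
      have h1 : ‖y s - y s'‖ ≤ ((1 + ‖ℓ‖) * (L + ‖p - q‖)) * |s - s'| := by
        rw [Prod.norm_def]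
        refine max_le ?_ ?_
        · refine (hτ s hs s' hs').trans ?_
          gcongr
          nlinarith [norm_nonneg ℓ, norm_nonneg (p - q), mul_nonneg (norm_nonneg ℓ) hL,
            mul_nonneg (norm_nonneg ℓ) (norm_nonneg (p - q))]
        · have : (y s - y s').2 = ((s - s' : ℝ) : ℂ) * ℓ (q - p) := by
            simp only [y, Prod.snd_sub, map_sub]; push_cast; ring
          rw [this, norm_mul, Complex.norm_real, Real.norm_eq_abs, mul_comm]
          gcongr
          refine (ℓ.le_opNorm _).trans ?_
          rw [norm_sub_rev q p]
          nlinarith [norm_nonneg ℓ, norm_nonneg (p - q), mul_nonneg (norm_nonneg ℓ) hL,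
            mul_nonneg (norm_nonneg ℓ) (norm_nonneg (p - q))]
      calc _ ≤ (K : ℝ) * (((1 + ‖ℓ‖) * (L + ‖p - q‖)) * |s - s'|) := by gcongr
        _ = _ := by ring
    · have : y 0 = Φ p := by simp [y, Φ, τ0]
      simp only [this]; exact hp'.1
    · have : y 1 = Φ q := by simp [y, Φ, τ1]
      simp only [this]; exact hq'.1
    · exact congrArg Prod.fst (hrU _ (hy s hs)).1
  · intro p hp t ht
    have hp' := hcU p (Metric.ball_subset_ball (min_le_left _ _) hp)
    have hy : ((t, ℓ p) : ℂ × ℂ) ∈ Metric.ball (Φ ω) r := by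
      rw [Metric.mem_ball, Prod.dist_eq]
      refine max_lt ?_ (lt_of_le_of_lt (le_max_right _ _) hp'.2)
      rw [dist_eq_norm]
      exact ht.trans_le (min_le_right _ _)
    refine ⟨g (t, ℓ p), congrArg Prod.fst (hrU _ hy).1, ?_⟩
    have := lip _ hy _ hp'.2
    rw [show g (Φ p) = p from hp'.1] at this
    refine this.trans ?_
    have h2 : ‖((t, ℓ p) : ℂ × ℂ) - Φ p‖ = ‖t - F p‖ := by
      simp [Φ, Prod.norm_def]
    rw [h2]
    gcongr
    nlinarith [norm_nonneg ℓ, K.2]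

lemma BoxAt.mono {F : ℂ × ℂ → ℂ} {ω : ℂ × ℂ} {c C c' C' : ℝ} (h : BoxAt F ω c C) (hc : c' ≤ c)
    (hC : C ≤ C') : BoxAt F ω c' C' := by
  refine ⟨fun p hp q hq τ L hτ τ0 τ1 hτc => ?_, fun p hp t ht => ?_⟩
  · obtain ⟨γ, h1, h2⟩ := h.1 p (Metric.ball_subset_ball hc hp) q (Metric.ball_subset_ball hc hq)
      τ L hτ τ0 τ1 fun s hs => (hτc s hs).trans_le hc
    have hL : 0 ≤ L := by
      have := hτ 0 ⟨le_rfl, zero_le_one⟩ 1 ⟨zero_le_one, le_rfl⟩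
      simp at this
      exact (norm_nonneg _).trans this
    exact ⟨γ, fun s hs s' hs' => (h1 s hs s' hs').trans (by gcongr), h2⟩
  · obtain ⟨q, h1, h2⟩ := h.2 p (Metric.ball_subset_ball hc hp) t (ht.trans_le hc)
    exact ⟨q, h1, h2.trans (by gcongr)⟩

/-- By compactness, the flow boxes at the points of the unit sphere can be taken uniform. -/
lemma exists_boxAt_sphere {F : ℂ × ℂ → ℂ} (hF : ContDiff ℂ 1 F)
    (hF' : ∀ w ≠ 0, fderiv ℂ F w ≠ 0) :
    ∃ c C : ℝ, 0 < c ∧ 0 ≤ C ∧ ∀ ω : ℂ × ℂ, ‖ω‖ = 1 → BoxAt F ω c C := by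
  have key : ∃ c C : ℝ, 0 < c ∧ 0 ≤ C ∧ ∀ ω ∈ Metric.sphere (0 : ℂ × ℂ) 1, BoxAt F ω c C := by
    refine (isCompact_sphere (0 : ℂ × ℂ) 1).induction_on
      (p := fun S => ∃ c C : ℝ, 0 < c ∧ 0 ≤ C ∧ ∀ ω ∈ S, BoxAt F ω c C) ?_ ?_ ?_ ?_
    · exact ⟨1, 0, one_pos, le_rfl, fun _ h => h.elim⟩
    · rintro S T hST ⟨c, C, hc, hC, h⟩
      exact ⟨c, C, hc, hC, fun ω hω => h ω (hST hω)⟩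
    · rintro S T ⟨c, C, hc, hC, h⟩ ⟨c', C', hc', hC', h'⟩
      refine ⟨min c c', max C C', lt_min hc hc', hC.trans (le_max_left _ _), ?_⟩
      rintro ω (hω | hω)
      · exact (h ω hω).mono (min_le_left _ _) (le_max_left _ _)
      · exact (h' ω hω).mono (min_le_right _ _) (le_max_right _ _)
    · intro ω hω
      have hω0 : ω ≠ 0 := by rintro rfl; simp at hω
      obtain ⟨c, C, hc, hC, h⟩ := boxAt_of_fderiv_ne_zero hF (hF' ω hω0)
      have hev : ∀ᶠ x in nhds ω, dist x ω < c / 2 ∧ dist (F x) (F ω) < c / 2 :=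
        (show ∀ᶠ x in nhds ω, dist x ω < c / 2 from Metric.ball_mem_nhds ω (half_pos hc)).and
          (hF.continuous.continuousAt.eventually (Metric.ball_mem_nhds (F ω) (half_pos hc)))
      refine ⟨_, mem_nhdsWithin_of_mem_nhds hev, c / 2, C, half_pos hc, hC, ?_⟩
      rintro x ⟨hx, hFx⟩
      have hb : ∀ p ∈ Metric.ball x (c / 2), p ∈ Metric.ball ω c := fun p hp => by
        rw [Metric.mem_ball] at hp ⊢
        linarith [dist_triangle p x ω]
      have hv : ∀ t, ‖t - F x‖ < c / 2 → ‖t - F ω‖ < c := fun t ht => by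
        rw [← dist_eq_norm] at ht ⊢
        linarith [dist_triangle t (F x) (F ω)]
      exact ⟨fun p hp q hq τ L hτ τ0 τ1 hτc =>
        h.1 p (hb p hp) q (hb q hq) τ L hτ τ0 τ1 fun s hs => hv _ (hτc s hs),
        fun p hp t ht => h.2 p (hb p hp) t (hv t ht)⟩
  obtain ⟨c, C, hc, hC, h⟩ := key
  exact ⟨c, C, hc, hC, fun ω hω => h ω (by simpa using hω)⟩

/-- Scale-invariant flow boxes for a form `F` of degree `k`: the box at `p` has size
`c * ‖p‖` in the source and `c * ‖p‖ ^ k` in the target. -/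
structure HasBox (F : ℂ × ℂ → ℂ) (k : ℕ) (c C : ℝ) : Prop where
  /-- A Lipschitz path `τ` of values of `F` near `F p` lifts to a Lipschitz path from `p` to `q`. -/
  path : ∀ p ≠ 0, ∀ q, ‖q - p‖ ≤ c * ‖p‖ → ∀ (τ : ℝ → ℂ) (L : ℝ),
    (∀ s ∈ Icc (0 : ℝ) 1, ∀ s' ∈ Icc (0 : ℝ) 1, ‖τ s - τ s'‖ ≤ L * |s - s'|) →
    τ 0 = F p → τ 1 = F q → (∀ s ∈ Icc (0 : ℝ) 1, ‖τ s - F p‖ ≤ c * ‖p‖ ^ k) →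
    ∃ γ : ℝ → ℂ × ℂ, (∀ s ∈ Icc (0 : ℝ) 1, ∀ s' ∈ Icc (0 : ℝ) 1,
        ‖γ s - γ s'‖ ≤ C * (L / ‖p‖ ^ (k - 1) + ‖p - q‖) * |s - s'|) ∧
      γ 0 = p ∧ γ 1 = q ∧ ∀ s ∈ Icc (0 : ℝ) 1, F (γ s) = τ s
  /-- A value close to `F p` is attained close to `p`. -/
  point : ∀ p ≠ 0, ∀ t, ‖t - F p‖ ≤ c * ‖p‖ ^ k →
    ∃ q, F q = t ∧ ‖q - p‖ ≤ C * (‖t - F p‖ / ‖p‖ ^ (k - 1))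

/-- Homogeneity spreads the uniform flow boxes of the unit sphere over all scales. -/
lemma exists_hasBox {F : ℂ × ℂ → ℂ} {k : ℕ} (hk : 1 ≤ k) (hF : ContDiff ℂ 1 F)
    (hF' : ∀ w ≠ 0, fderiv ℂ F w ≠ 0) (hom : ∀ (c : ℂ) w, F (c • w) = c ^ k * F w) :
    ∃ c C : ℝ, 0 < c ∧ c ≤ 1 ∧ 1 ≤ C ∧ HasBox F k c C := by
  obtain ⟨c₀, C₀, hc₀, hC₀, hbox₀⟩ := exists_boxAt_sphere hF hF'
  obtain ⟨c, hc, hc1, hcc⟩ : ∃ c : ℝ, 0 < c ∧ c ≤ 1 ∧ c < min c₀ 2 :=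
    ⟨min (c₀ / 2) 1, by positivity, min_le_right _ _, lt_min
      ((min_le_left _ _).trans_lt (half_lt_self hc₀)) ((min_le_right _ _).trans_lt one_lt_two)⟩
  have hcc₀ : c < c₀ := hcc.trans_le (min_le_left _ _)
  set C := max C₀ 1 with hC
  have hbox : ∀ ω : ℂ × ℂ, ‖ω‖ = 1 → BoxAt F ω c₀ C := fun ω hω =>
    (hbox₀ ω hω).mono le_rfl (le_max_left _ _)
  obtain ⟨m, rfl⟩ : ∃ m, k = m + 1 := ⟨k - 1, by omega⟩
  refine ⟨c, C, hc, hc1, le_max_right _ _, ?_, ?_⟩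
  all_goals
    intro p hp
    have hρ : 0 < ‖p‖ := norm_pos_iff.2 hp
    have hρ' : (‖p‖ : ℂ) ≠ 0 := by exact_mod_cast hρ.ne'
    have hun : ∀ v : ℂ × ℂ, ‖(‖p‖ : ℂ)⁻¹ • v‖ = ‖v‖ / ‖p‖ := fun v => by
      rw [norm_smul, norm_inv, Complex.norm_real, norm_norm]; field_simp
    have hunc : ∀ t : ℂ, ‖(‖p‖ : ℂ)⁻¹ ^ (m + 1) * t‖ = ‖t‖ / ‖p‖ ^ (m + 1) := fun v => by
      rw [norm_mul, norm_pow, norm_inv, Complex.norm_real, norm_norm, inv_pow, div_eq_inv_mul]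
    have hω := hbox ((‖p‖ : ℂ)⁻¹ • p) (by rw [hun, div_self hρ.ne'])
    have hpmem : (‖p‖ : ℂ)⁻¹ • p ∈ Metric.ball ((‖p‖ : ℂ)⁻¹ • p) c₀ := Metric.mem_ball_self hc₀
  · intro q hq τ L hτ τ0 τ1 hτc
    obtain ⟨γ, h1, h2, h3, h4⟩ := hω.1 _ hpmem ((‖p‖ : ℂ)⁻¹ • q) (by
        rw [Metric.mem_ball, dist_eq_norm, ← smul_sub, hun, div_lt_iff₀ hρ]
        exact hq.trans_lt (by gcongr))
      (fun s => (‖p‖ : ℂ)⁻¹ ^ (m + 1) * τ s) (L / ‖p‖ ^ (m + 1))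
      (fun s hs s' hs' => by
        rw [← mul_sub, hunc, div_le_iff₀ (by positivity)]
        refine (hτ s hs s' hs').trans (le_of_eq ?_)
        field_simp)
      (by rw [hom, τ0]) (by rw [hom, τ1])
      (fun s hs => by
        rw [hom, ← mul_sub, hunc, div_lt_iff₀ (by positivity)]
        exact (hτc s hs).trans_lt (by gcongr))
    refine ⟨fun s => (‖p‖ : ℂ) • γ s, fun s hs s' hs' => ?_, ?_, ?_, fun s hs => ?_⟩
    · rw [← smul_sub, norm_smul, Complex.norm_real, norm_norm]
      refine (mul_le_mul_of_nonneg_left (h1 s hs s' hs') hρ.le).trans (le_of_eq ?_)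
      rw [← smul_sub, hun]
      simp only [Nat.add_sub_cancel]
      field_simp
      ring
    · simp [h2, smul_smul, hρ']
    · simp [h3, smul_smul, hρ']
    · rw [hom, h4 s hs, ← mul_assoc, ← mul_pow, mul_inv_cancel₀ hρ', one_pow, one_mul]
  · intro t ht
    obtain ⟨q, h1, h2⟩ := hω.2 _ hpmem ((‖p‖ : ℂ)⁻¹ ^ (m + 1) * t) (by
        rw [hom, ← mul_sub, hunc, div_lt_iff₀ (by positivity)]
        exact ht.trans_lt (by gcongr))
    refine ⟨(‖p‖ : ℂ) • q, ?_, ?_⟩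
    · rw [hom, h1, ← mul_assoc, ← mul_pow, mul_inv_cancel₀ hρ', one_pow, one_mul]
    · have : (‖p‖ : ℂ) • q - p = (‖p‖ : ℂ) • (q - (‖p‖ : ℂ)⁻¹ • p) := by
        rw [smul_sub, smul_smul, mul_inv_cancel₀ hρ', one_smul]
      rw [this, norm_smul, Complex.norm_real, norm_norm]
      refine (mul_le_mul_of_nonneg_left h2 hρ.le).trans (le_of_eq ?_)
      rw [hom, ← mul_sub, hunc]
      simp only [Nat.add_sub_cancel]
      field_simp
      ring

/-- The fibre of `F` over `t`. -/
def fib (F : ℂ × ℂ → ℂ) (t : ℂ) : Set (ℂ × ℂ) := {w | F w = t}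

lemma HasBox.innerDist_le {F : ℂ × ℂ → ℂ} {k : ℕ} {c C : ℝ} (h : HasBox F k c C) (hc : 0 ≤ c)
    {p q : ℂ × ℂ} (hp : p ≠ 0) (hpq : F q = F p) (hq : ‖q - p‖ ≤ c * ‖p‖) :
    innerDist (fib F (F p)) p q ≤ ENNReal.ofReal (C * ‖q - p‖) := by
  obtain ⟨γ, h1, h2, h3, h4⟩ := h.path p hp q hq (fun _ => F p) 0 (by simp) rfl hpq.symm
    (fun s _ => by simp; positivity)
  rw [norm_sub_rev q p]
  exact innerDist_le_of_lipschitz (by simpa using h1) h4 h2 h3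

lemma HasBox.innerDist_fib_lt_top {F : ℂ × ℂ → ℂ} {k : ℕ} {c C : ℝ} (h : HasBox F k c C)
    (hc : 0 ≤ c) {t : ℂ} {p q : ℂ × ℂ} (hp : p ≠ 0) (hpt : F p = t) (hqt : F q = t)
    (hq : ‖q - p‖ ≤ c * ‖p‖) : innerDist (fib F t) p q < ⊤ := by
  subst hpt
  exact (h.innerDist_le hc hp hqt hq).trans_lt ENNReal.ofReal_lt_top

/-! ### Connectedness of the Milnor fibre -/

/-- When `v'` is close to `v` and `F v ≠ 0`, the points of the fibre `F = 1` on the line through `v`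
are joined inside the fibre to points on the line through `v'`, by one and the same factor `ρ`,
a `k`-th root of `F v / F v'` close to `1`. -/
lemma HasBox.eventually_line {F : ℂ × ℂ → ℂ} {k : ℕ} (hk : 1 ≤ k) {c C : ℝ} (h : HasBox F k c C)
    (hc : 0 < c) (hF : Continuous F) (hom : ∀ (c : ℂ) w, F (c • w) = c ^ k * F w)
    {v : ℂ × ℂ} (hv : F v ≠ 0) :
    ∀ᶠ v' in nhds v, ∃ ρ : ℂ, ρ ≠ 0 ∧ ρ ^ k * F v' = F v ∧
      ∀ κ : ℂ, κ ^ k * F v = 1 → innerDist (fib F 1) (κ • v) ((κ * ρ) • v') < ⊤ := by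
  have hv0 : v ≠ 0 := by
    rintro rfl
    have := hom 0 0
    rw [zero_pow (by omega), zero_mul, smul_zero] at this
    exact hv this
  let ρ : ℂ × ℂ → ℂ := fun v' => Complex.exp (-(Complex.log (F v' / F v) / k))
  have hρv : ρ v = 1 := by simp [ρ, div_self hv]
  have hρ : ContinuousAt ρ v := by
    have h1 : ContinuousAt (fun v' => F v' / F v) v := (hF.div_const _).continuousAt
    have h2 : ContinuousAt (fun v' => Complex.log (F v' / F v)) v :=
      h1.clog (by rw [div_self hv]; exact Complex.one_mem_slitPlane)
    exact (h2.div_const _).neg.cexp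
  have h1 : ContinuousAt (fun v' => ‖ρ v' • v' - v‖) v :=
    ((hρ.smul continuousAt_id).sub continuousAt_const).norm
  have h2 : ∀ᶠ v' in nhds v, ‖ρ v' • v' - v‖ < c * ‖v‖ := by
    refine h1.eventually (Iio_mem_nhds ?_)
    simp only [hρv, one_smul, sub_self, norm_zero]
    have := norm_pos_iff.2 hv0
    positivity
  have h3 : ∀ᶠ v' in nhds v, F v' ≠ 0 := hF.continuousAt.eventually_ne hv
  filter_upwards [h2, h3] with v' h2 h3
  have hρk : ρ v' ^ k * F v' = F v := by
    simp only [ρ]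
    rw [← Complex.exp_nat_mul, mul_neg, mul_div_cancel₀ _ (by exact_mod_cast (by omega : k ≠ 0)),
      Complex.exp_neg, Complex.exp_log (div_ne_zero h3 hv)]
    field_simp
  refine ⟨ρ v', Complex.exp_ne_zero _, hρk, fun κ hκ => ?_⟩
  have hκ0 : κ ≠ 0 := by rintro rfl; simp [show k ≠ 0 by omega] at hκ
  refine h.innerDist_fib_lt_top hc.le (smul_ne_zero hκ0 hv0) ?_ ?_ ?_
  · rw [hom, hκ]
  · rw [hom, mul_pow, mul_assoc, hρk, hκ]
  · rw [mul_smul, ← smul_sub, norm_smul, norm_smul, mul_left_comm]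
    gcongr

/-- Two points of the fibre `F = 1` joined by the continuous image of a preconnected set are at
finite inner distance. -/
lemma HasBox.lt_top_of_preconnected {F : ℂ × ℂ → ℂ} {k : ℕ} {c C : ℝ} (h : HasBox F k c C)
    (hc : 0 < c) (h0 : F 0 = 0) {T : Set ℂ} (hT : IsPreconnected T) {g : ℂ → ℂ × ℂ}
    (hg : ContinuousOn g T) (hm : MapsTo g T (fib F 1)) {x y : ℂ} (hx : x ∈ T) (hy : y ∈ T) :
    innerDist (fib F 1) (g x) (g y) < ⊤ := by
  refine hT.induction₂ (fun x y => innerDist (fib F 1) (g x) (g y) < ⊤) ?_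
    (fun x y z _ _ _ => innerDist_lt_top_trans)
    (fun x y _ _ h => by rwa [innerDist_comm]) hx hy
  intro x hx
  have hgx : g x ≠ 0 := by
    intro h1
    have := hm hx
    rw [h1] at this
    exact zero_ne_one (h0.symm.trans this)
  have hpos := norm_pos_iff.2 hgx
  have := (hg x hx).eventually (Metric.closedBall_mem_nhds (g x) (ε := c * ‖g x‖) (by positivity))
  filter_upwards [this, self_mem_nhdsWithin] with y hy hyT
  rw [dist_eq_norm] at hy
  exact h.innerDist_fib_lt_top hc.le hgx (hm hx) (hm hyT) hy

/-- The Milnor fibre `F = 1` is connected by rectifiable paths. Over the chart `x ≠ 0` it is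
a `k`-sheeted cover of `ℂ` minus the roots of `F (1, ·)`; that base is connected, and going once
around a root, which is simple, permutes the `k` sheets cyclically. -/
lemma form_fib_one_connected {k : ℕ} (hk : 1 ≤ k) {a b : Fin k → ℂ} (hb : ∀ i, b i ≠ 0)
    (hd : ∀ i j, i ≠ j → a i * b j - a j * b i ≠ 0) {c C : ℝ} (h : HasBox (form a b) k c C)
    (hc : 0 < c) :
    ∃ e, form a b e = 1 ∧ ∀ w, form a b w = 1 → innerDist (fib (form a b) 1) w e < ⊤ := by
  set F := form a b with hFdef
  have hom : ∀ (c : ℂ) w, F (c • w) = c ^ k * F w := form_smul a b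
  have hF : Continuous F := (form_contDiff a b).continuous
  have hk0 : k ≠ 0 := by omega
  have hkC : (k : ℂ) ≠ 0 := by exact_mod_cast hk0
  have h0 : F 0 = 0 := by
    have := hom 0 0
    rwa [zero_pow hk0, zero_mul, smul_zero] at this
  have hF1 : ∀ m : ℂ, F (1, m) = 0 ↔ ∃ i, m = -a i / b i := fun m => by
    simp only [hFdef, form, mul_one, Finset.prod_eq_zero_iff, Finset.mem_univ, true_and]
    refine exists_congr fun i => ?_
    rw [eq_div_iff (hb i)]
    constructor <;> intro h <;> linear_combination h
  -- the monodromy around the root `m₀`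
  let i₀ : Fin k := ⟨0, hk⟩
  set m₀ := -a i₀ / b i₀ with hm₀
  let G : ℂ → ℂ := fun x => ∏ j ∈ Finset.univ.erase i₀, (a j + b j * (m₀ + x))
  have hFG : ∀ x, F (1, m₀ + x) = b i₀ * x * G x := fun x => by
    simp only [hFdef, form, mul_one, G]
    rw [← Finset.mul_prod_erase _ _ (Finset.mem_univ i₀)]
    congr 1
    have := hb i₀
    rw [hm₀]; field_simp; ring
  have hG0 : G 0 ≠ 0 := by
    refine Finset.prod_ne_zero_iff.2 fun j hj => ?_
    have h1 := hd i₀ j (Finset.ne_of_mem_erase hj).symm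
    have h2 := hb i₀
    rw [hm₀, add_zero]
    intro h3
    apply h1
    field_simp at h3
    linear_combination -h3
  have hGc : Continuous G := by fun_prop
  obtain ⟨ε, hε, hGε⟩ : ∃ ε > 0, ∀ x, ‖x‖ < ε → G x / G 0 ∈ Complex.slitPlane := by
    have h1 : ContinuousAt (fun x => G x / G 0) 0 := (hGc.div_const _).continuousAt
    have h2 := h1.eventually (Complex.isOpen_slitPlane.mem_nhds
      (by simp only [div_self hG0]; exact Complex.one_mem_slitPlane))
    obtain ⟨ε, hε, h3⟩ := Metric.eventually_nhds_iff.1 h2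
    exact ⟨ε, hε, fun x hx => h3 (by simpa using hx)⟩
  obtain ⟨κ₀, hκ₀⟩ : ∃ κ₀ : ℂ, κ₀ ^ k = 1 / (b i₀ * G 0) := by
    obtain ⟨z, hz⟩ := IsAlgClosed.exists_pow_nat_eq (1 / (b i₀ * G 0)) (by omega : 0 < k)
    exact ⟨z, hz⟩
  -- `m = m₀ + exp ζ` runs over the universal cover of a punctured disc around `m₀`; over it,
  -- `κ ζ • (1, m)` is a branch of the fibre `F = 1`
  let T : Set ℂ := {ζ | ζ.re < Real.log ε}
  have hT : Convex ℝ T := convex_halfSpace_re_lt _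
  have hTε : ∀ ζ ∈ T, ‖Complex.exp ζ‖ < ε := fun ζ hζ => by
    rw [Complex.norm_exp, ← Real.exp_log hε]
    exact Real.exp_lt_exp.2 hζ
  let κ : ℂ → ℂ := fun ζ =>
    κ₀ * Complex.exp (-(ζ / k)) * Complex.exp (-(Complex.log (G (Complex.exp ζ) / G 0) / k))
  let g : ℂ → ℂ × ℂ := fun ζ => κ ζ • ((1 : ℂ), m₀ + Complex.exp ζ)
  have hκ : ∀ ζ ∈ T, κ ζ ^ k * F (1, m₀ + Complex.exp ζ) = 1 := fun ζ hζ => by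
    have h1 := Complex.slitPlane_ne_zero (hGε _ (hTε ζ hζ))
    have h2 : G (Complex.exp ζ) ≠ 0 := fun h => by simp [h] at h1
    simp only [κ]
    rw [mul_pow, mul_pow, hκ₀, ← Complex.exp_nat_mul, ← Complex.exp_nat_mul, mul_neg, mul_neg,
      mul_div_cancel₀ _ hkC, mul_div_cancel₀ _ hkC, Complex.exp_neg, Complex.exp_neg,
      Complex.exp_log h1, hFG]
    have := hb i₀
    have := Complex.exp_ne_zero ζ
    field_simp
  have hgm : MapsTo g T (fib F 1) := fun ζ hζ => by
    change F (g ζ) = 1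
    simp only [g]
    rw [hom, hκ ζ hζ]
  have hgc : ContinuousOn g T := by
    have h1 : ContinuousOn (fun ζ => Complex.log (G (Complex.exp ζ) / G 0)) T :=
      ((hGc.comp Complex.continuous_exp).div_const _).continuousOn.clog
        fun ζ hζ => hGε _ (hTε ζ hζ)
    refine ContinuousOn.smul (f := κ) ?_ (by fun_prop)
    exact (by fun_prop : Continuous fun ζ : ℂ => κ₀ * Complex.exp (-(ζ / k))).continuousOn.mul
      (h1.div_const _).neg.cexp
  set ζ₀ : ℂ := ((Real.log ε - 1 : ℝ) : ℂ) with hζ₀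
  have hζT : ∀ j : ℕ, ζ₀ + j * (2 * Real.pi * Complex.I) ∈ T := fun j => by
    simp [T, hζ₀]
  have hζ₀T : ζ₀ ∈ T := by simpa using hζT 0
  set ms := m₀ + Complex.exp ζ₀ with hms
  have hexp : ∀ j : ℕ, Complex.exp (ζ₀ + j * (2 * Real.pi * Complex.I)) = Complex.exp ζ₀ :=
    fun j => by
      rw [Complex.exp_add, Complex.exp_nat_mul, Complex.exp_two_pi_mul_I, one_pow, mul_one]
  have hκ0 : κ ζ₀ ≠ 0 := by
    intro h1
    have := hκ ζ₀ hζ₀T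
    rw [h1, zero_pow hk0, zero_mul] at this
    exact zero_ne_one this
  -- all the points of the fibre over `ms` are joined by turning around `m₀`, since
  -- `ζ ↦ ζ + 2πi` multiplies `κ` by a primitive `k`-th root of unity
  have hover : ∀ r : ℂ, r ^ k * F (1, ms) = 1 →
      innerDist (fib F 1) (r • ((1 : ℂ), ms)) (g ζ₀) < ⊤ := by
    intro r hr
    have h1 := hκ ζ₀ hζ₀T
    have h2 : F (1, ms) ≠ 0 := fun h2 => by simp [h2] at hr
    have hr0 : r ≠ 0 := by rintro rfl; simp [hk0] at hr
    have h3 : (κ ζ₀ / r) ^ k = 1 := by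
      have : κ ζ₀ ^ k = r ^ k := mul_right_cancel₀ h2 (h1.trans hr.symm)
      rw [div_pow, this, div_self (pow_ne_zero _ hr0)]
    have : NeZero k := ⟨hk0⟩
    obtain ⟨j, -, hj⟩ := (Complex.isPrimitiveRoot_exp k hk0).eq_pow_of_pow_eq_one h3
    have h4 : κ (ζ₀ + j * (2 * Real.pi * Complex.I)) = r := by
      have e1 : Complex.exp (-((ζ₀ + j * (2 * Real.pi * Complex.I)) / k)) =
          Complex.exp (-(ζ₀ / k)) * (r / κ ζ₀) := by
        rw [← inv_div (κ ζ₀) r, ← hj, ← Complex.exp_nat_mul, ← Complex.exp_neg, ← Complex.exp_add]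
        congr 1; ring
      have e2 : κ (ζ₀ + j * (2 * Real.pi * Complex.I)) = κ ζ₀ * (r / κ ζ₀) := by
        simp only [κ] at e1 ⊢
        rw [hexp, e1]; ring
      rw [e2, mul_div_cancel₀ _ hκ0]
    have h5 : g (ζ₀ + j * (2 * Real.pi * Complex.I)) = r • ((1 : ℂ), ms) := by
      simp only [g]
      rw [h4, hexp]
    rw [← h5]
    exact h.lt_top_of_preconnected hc h0 hT.isPreconnected hgc hgm (hζT j) hζ₀T
  -- the complement of the roots is connected, so each point is joined to one over `ms`
  let Z : Set ℂ := range fun i => -a i / b i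
  have hZ : ∀ m, m ∈ Zᶜ ↔ F (1, m) ≠ 0 := fun m => by
    rw [Ne, hF1]; simp [Z, eq_comm]
  have hZc : IsPreconnected Zᶜ :=
    ((finite_range _).countable.isPathConnected_compl_of_one_lt_rank
      (by rw [Complex.rank_real_complex]; exact Cardinal.one_lt_two)).isConnected.isPreconnected
  let P : ℂ → ℂ → Prop := fun m m' => ∀ r : ℂ, r ^ k * F (1, m) = 1 →
    ∃ r' : ℂ, r' ^ k * F (1, m') = 1 ∧
      innerDist (fib F 1) (r • ((1 : ℂ), m)) (r' • ((1 : ℂ), m')) < ⊤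
  have hP : ∀ m ∈ Zᶜ, ∀ m' ∈ Zᶜ, P m m' := by
    intro m hm m' hm'
    refine hZc.induction₂' P ?_ ?_ hm hm'
    · intro m hm
      have h1 := h.eventually_line hk hc hF hom ((hZ m).1 hm)
      have h2 : ContinuousAt (fun m' : ℂ => ((1 : ℂ), m')) m := by fun_prop
      refine nhdsWithin_le_nhds ((h2.eventually h1).mono ?_)
      rintro m' ⟨ρ, hρ0, hρ, h3⟩
      have e : ∀ r : ℂ, r ^ k * F (1, m') = 1 → (r / ρ) ^ k * F (1, m) = 1 := fun r hr => by
        rw [div_pow, ← hρ, ← mul_assoc, div_mul_cancel₀ _ (pow_ne_zero _ hρ0), hr]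
      refine ⟨fun r hr => ⟨r * ρ, by rw [mul_pow, mul_assoc, hρ, hr], h3 r hr⟩,
        fun r hr => ⟨r / ρ, e r hr, ?_⟩⟩
      rw [innerDist_comm]
      have := h3 (r / ρ) (e r hr)
      rwa [div_mul_cancel₀ _ hρ0] at this
    · intro x y z _ _ _ hxy hyz r hr
      obtain ⟨r', hr', h1⟩ := hxy r hr
      obtain ⟨r'', hr'', h2⟩ := hyz r' hr'
      exact ⟨r'', hr'', innerDist_lt_top_trans h1 h2⟩
  have hms' : ms ∈ Zᶜ := (hZ ms).2 fun h1 => by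
    have := hκ ζ₀ hζ₀T
    rw [h1, mul_zero] at this
    exact zero_ne_one this
  have hx : ∀ w : ℂ × ℂ, F w = 1 → w.1 ≠ 0 → innerDist (fib F 1) w (g ζ₀) < ⊤ := by
    intro w hw hw1
    have e1 : w = w.1 • ((1 : ℂ), w.2 / w.1) := by
      ext
      · simp
      · simp [mul_div_cancel₀ _ hw1]
    have e2 : w.1 ^ k * F (1, w.2 / w.1) = 1 := by rw [← hom, ← e1, hw]
    obtain ⟨r', hr', h1⟩ := hP (w.2 / w.1) ((hZ _).2 fun h1 => by simp [h1] at e2) ms hms' _ e2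
    rw [← e1] at h1
    exact innerDist_lt_top_trans h1 (hover r' hr')
  refine ⟨g ζ₀, hgm hζ₀T, fun w hw => ?_⟩
  by_cases hw1 : w.1 = 0
  · -- a point of the line `x = 0` is moved off it first
    have h1 := h.eventually_line hk hc hF hom (v := w) (by rw [hw]; exact one_ne_zero)
    have h2 : Filter.Tendsto (fun η : ℂ => w + (η, 0)) (nhds 0) (nhds w) := by
      have : Continuous fun η : ℂ => w + (η, 0) := by fun_prop
      simpa [← Prod.zero_eq_mk] using this.tendsto 0
    have h3 := (h2.eventually h1).filter_mono (nhdsWithin_le_nhds (s := {0}ᶜ))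
    obtain ⟨η, ⟨ρ, hρ0, hρ, h5⟩, hη⟩ := (h3.and self_mem_nhdsWithin).exists
    replace hη : η ≠ 0 := hη
    have h6 := h5 1 (by rw [hw]; simp)
    rw [one_smul, one_mul] at h6
    refine innerDist_lt_top_trans h6 (hx _ ?_ ?_)
    · rw [hom, hρ, hw]
    · simp [hw1, hρ0, hη]
  · exact hx w hw hw1

/-! ### The fibres of the form -/

/-- Far from the origin, the fibre `F = 1` is close to the cone `F = 0`: a point `w` of it can be
moved inside the fibre towards the origin by a definite proportion of `‖w‖`. -/
lemma HasBox.descent_step {F : ℂ × ℂ → ℂ} {k : ℕ} (hk : 1 ≤ k) {c C : ℝ} (h : HasBox F k c C)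
    (hc : 0 < c) (hc1 : c ≤ 1) (hC : 1 ≤ C) (hom : ∀ (c : ℂ) w, F (c • w) = c ^ k * F w)
    {w : ℂ × ℂ} (hw : F w = 1) (hR : 8 * C / c ≤ ‖w‖) :
    ∃ w', F w' = 1 ∧ ‖w'‖ ≤ (1 - c / 8) * ‖w‖ ∧ ‖w' - w‖ ≤ c * ‖w‖ := by
  have hR' : 8 * C ≤ ‖w‖ * c := (div_le_iff₀ hc).1 hR
  have hw0 : 0 < ‖w‖ := by
    have : 0 < 8 * C / c := by positivity
    linarith
  have hη : (0 : ℝ) < 1 - c / 4 := by linarith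
  set p : ℂ × ℂ := ((1 - c / 4 : ℝ) : ℂ) • w with hp
  have hpn : ‖p‖ = (1 - c / 4) * ‖w‖ := by
    rw [hp, norm_smul, Complex.norm_real, Real.norm_of_nonneg hη.le]
  have hpc : 1 ≤ c * ‖p‖ := by rw [hpn]; nlinarith
  have hp1 : 1 ≤ ‖p‖ := by nlinarith [norm_nonneg p]
  have hFp : F p = (((1 - c / 4) ^ k : ℝ) : ℂ) := by
    rw [hp, hom, hw, mul_one]; push_cast; rfl
  have hFp' : ‖1 - F p‖ ≤ 1 := by
    rw [hFp, ← Complex.ofReal_one, ← Complex.ofReal_sub, Complex.norm_real, Real.norm_of_nonneg]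
    · have := pow_pos hη k
      linarith
    · have := pow_le_one₀ (n := k) hη.le (by linarith)
      linarith
  obtain ⟨w', h1, h2⟩ := h.point p (norm_pos_iff.1 (by linarith)) 1 (hFp'.trans (hpc.trans (by
    gcongr
    exact le_self_pow₀ hp1 (by omega))))
  have h3 : ‖w' - p‖ ≤ C := h2.trans (by
    refine mul_le_of_le_one_right (by linarith) ?_
    refine div_le_one_of_le₀ (hFp'.trans (one_le_pow₀ hp1)) (by positivity))
  have h4 : ‖p - w‖ = c / 4 * ‖w‖ := by
    have : p - w = ((-(c / 4) : ℝ) : ℂ) • w := by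
      rw [hp]; push_cast; module
    rw [this, norm_smul, Complex.norm_real, norm_neg, Real.norm_of_nonneg (by positivity)]
  refine ⟨w', h1, ?_, ?_⟩
  · have := norm_le_norm_add_norm_sub' w' p
    rw [hpn] at this
    linarith
  · have := norm_sub_le_norm_sub_add_norm_sub w' p w
    nlinarith

/-- Points of the fibre `F = 1` are joined to a base point by paths of length comparable to their
norm. -/
lemma HasBox.fib_one_bound {F : ℂ × ℂ → ℂ} {k : ℕ} (hk : 1 ≤ k) {c C : ℝ} (h : HasBox F k c C)
    (hc : 0 < c) (hc1 : c ≤ 1) (hC : 1 ≤ C) (hF : Continuous F)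
    (hom : ∀ (c : ℂ) w, F (c • w) = c ^ k * F w) {A : ℝ} (hA : 1 ≤ A)
    (hbd : ∀ w, ‖F w‖ ≤ A * ‖w‖ ^ k) {e : ℂ × ℂ}
    (hfin : ∀ w, F w = 1 → innerDist (fib F 1) w e < ⊤) :
    ∃ K : ℝ, 0 ≤ K ∧ ∀ w, F w = 1 → innerDist (fib F 1) w e ≤ ENNReal.ofReal (K * ‖w‖) := by
  have hlow : ∀ w, F w = 1 → 1 ≤ A * ‖w‖ := fun w hw => by
    have h1 := hbd w
    rw [hw, norm_one] at h1
    rcases le_total 1 ‖w‖ with h2 | h2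
    · nlinarith
    · exact h1.trans (by gcongr; exact pow_le_of_le_one (norm_nonneg _) h2 (by omega))
  have hne : ∀ w, F w = 1 → w ≠ 0 := by
    rintro w hw rfl
    have := hlow 0 hw
    norm_num at this
  set R := 8 * C / c with hR
  have hRpos : 0 < R := by positivity
  -- the compact part of the fibre
  obtain ⟨K₀, hK₀, hK₀'⟩ : ∃ B : ℝ, 0 ≤ B ∧ ∀ w ∈ fib F 1 ∩ Metric.closedBall 0 R,
      innerDist (fib F 1) w e ≤ ENNReal.ofReal B := by
    have hcpt : IsCompact (fib F 1 ∩ Metric.closedBall 0 R) :=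
      (isCompact_closedBall _ _).inter_left (isClosed_eq hF continuous_const)
    -- the inner distance to `e` is finite and, by the flow boxes, locally bounded
    refine hcpt.induction_on (p := fun S => ∃ B : ℝ, 0 ≤ B ∧ ∀ w ∈ S,
      innerDist (fib F 1) w e ≤ ENNReal.ofReal B) ⟨0, le_rfl, by simp⟩ ?_ ?_ ?_
    · rintro S S' hS ⟨B, hB, h1⟩
      exact ⟨B, hB, fun w hw => h1 w (hS hw)⟩
    · rintro S S' ⟨B, hB, h1⟩ ⟨B', hB', h2⟩
      refine ⟨max B B', le_max_of_le_left hB, ?_⟩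
      rintro w (hw | hw)
      · exact (h1 w hw).trans (ENNReal.ofReal_le_ofReal (le_max_left _ _))
      · exact (h2 w hw).trans (ENNReal.ofReal_le_ofReal (le_max_right _ _))
    · rintro x ⟨hx, -⟩
      have hx0 := norm_pos_iff.2 (hne x hx)
      refine ⟨Metric.closedBall x (c * ‖x‖) ∩ fib F 1, Filter.inter_mem (mem_nhdsWithin_of_mem_nhds
        (Metric.closedBall_mem_nhds x (by positivity)))
        (Filter.mem_of_superset self_mem_nhdsWithin inter_subset_left),
        C * (c * ‖x‖) + (innerDist (fib F 1) x e).toReal, by positivity, ?_⟩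
      rintro y ⟨hy, hyF⟩
      rw [Metric.mem_closedBall, dist_eq_norm] at hy
      refine innerDist_trans_le (y := x) (by positivity) ENNReal.toReal_nonneg ?_
        (ENNReal.ofReal_toReal (hfin x hx).ne).ge
      have h1 := h.innerDist_le hc.le (hne x hx) (hyF.trans hx.symm) hy
      rw [hx, innerDist_comm] at h1
      exact h1.trans (ENNReal.ofReal_le_ofReal (by gcongr))
  -- a descent step shortens `‖w‖` by at least `c * R / 8 = C`, and costs `C * c * ‖w‖`
  have key : ∀ N : ℕ, ∀ w, F w = 1 → ‖w‖ ≤ R + N * C →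
      innerDist (fib F 1) w e ≤ ENNReal.ofReal (8 * C * ‖w‖ + K₀) := by
    intro N
    induction N with
    | zero =>
      intro w hw hwN
      refine (hK₀' w ⟨hw, by simpa using hwN⟩).trans (ENNReal.ofReal_le_ofReal ?_)
      have : 0 ≤ 8 * C * ‖w‖ := by positivity
      linarith
    | succ N ih =>
      intro w hw hwN
      by_cases hwR : R ≤ ‖w‖
      · obtain ⟨w', h1, h2, h3⟩ := h.descent_step hk hc hc1 hC hom hw hwR
        have h4 : 8 * C ≤ ‖w‖ * c := (div_le_iff₀ hc).1 hwR
        push_cast at hwN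
        have h5 := h.innerDist_le hc.le (hne w hw) (h1.trans hw.symm) h3
        rw [hw] at h5
        refine (innerDist_trans_le (by positivity) (by positivity) h5
          (ih w' h1 (by linarith))).trans (ENNReal.ofReal_le_ofReal ?_)
        have h6 : C * ‖w' - w‖ ≤ C * (c * ‖w‖) := by gcongr
        have h7 : C * ‖w'‖ ≤ C * ((1 - c / 8) * ‖w‖) := by gcongr
        linarith
      · refine (hK₀' w ⟨hw, by simpa using (not_le.1 hwR).le⟩).trans (ENNReal.ofReal_le_ofReal ?_)
        have : 0 ≤ 8 * C * ‖w‖ := by positivity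
        linarith
  refine ⟨8 * C + K₀ * A, by positivity, fun w hw => ?_⟩
  obtain ⟨N, hN⟩ := exists_nat_ge (‖w‖ / C)
  rw [div_le_iff₀ (by linarith)] at hN
  refine (key N w hw (by linarith)).trans (ENNReal.ofReal_le_ofReal ?_)
  nlinarith [hlow w hw]

/-- The nonzero fibres of `F` are Lipschitz normally embedded, uniformly in the fibre. -/
lemma exists_fib_lne {F : ℂ × ℂ → ℂ} {k : ℕ} (hk : 1 ≤ k) {c C : ℝ} (h : HasBox F k c C)
    (hc : 0 < c) (hC : 1 ≤ C) (hom : ∀ (c : ℂ) w, F (c • w) = c ^ k * F w)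
    {e : ℂ × ℂ} {K : ℝ} (hK : 0 ≤ K)
    (hone : ∀ w, F w = 1 → innerDist (fib F 1) w e ≤ ENNReal.ofReal (K * ‖w‖)) :
    ∃ K' : ℝ, 0 ≤ K' ∧ ∀ t ≠ 0, ∀ w w', F w = t → F w' = t →
      innerDist (fib F t) w w' ≤ ENNReal.ofReal (K' * ‖w - w'‖) := by
  refine ⟨C + K * (2 / c + 1), by positivity, fun t ht w w' hw hw' => ?_⟩
  have hw0 : w ≠ 0 := by
    rintro rfl
    have := hom 0 0
    rw [zero_pow (by omega), zero_mul, smul_zero, hw] at this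
    exact ht this
  rcases le_or_gt ‖w' - w‖ (c * ‖w‖) with h1 | h1
  · have h2 := h.innerDist_le hc.le hw0 (hw'.trans hw.symm) h1
    rw [hw, norm_sub_rev] at h2
    refine h2.trans (ENNReal.ofReal_le_ofReal ?_)
    have : 0 ≤ K * (2 / c + 1) * ‖w - w'‖ := by positivity
    linarith
  · -- far apart points: rescale to the fibre over `1` and go through the base point
    obtain ⟨τ, hτ⟩ := IsAlgClosed.exists_pow_nat_eq t (by omega : 0 < k)
    have hτ0 : τ ≠ 0 := by
      rintro rfl
      rw [zero_pow (by omega)] at hτ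
      exact ht hτ.symm
    have hτn : 0 < ‖τ‖ := norm_pos_iff.2 hτ0
    have h2 : ∀ u, F u = t → F (τ⁻¹ • u) = 1 := fun u hu => by
      rw [hom, hu, ← hτ, inv_pow, inv_mul_cancel₀ (pow_ne_zero _ hτ0)]
    have h3 : innerDist (fib F 1) (τ⁻¹ • w) (τ⁻¹ • w') ≤
        ENNReal.ofReal (K * ‖τ⁻¹ • w‖ + K * ‖τ⁻¹ • w'‖) :=
      innerDist_trans_le (by positivity) (by positivity) (hone _ (h2 w hw))
        (by rw [innerDist_comm]; exact hone _ (h2 w' hw'))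
    have h4 := innerDist_image_le (X := fib F 1) (Y := fib F t) (lipschitzWith_smul τ)
      (by simpa using hτ0) (fun u (hu : F u = 1) => by
        change F (τ • u) = t
        rw [hom, hu, mul_one, hτ]) (τ⁻¹ • w) (τ⁻¹ • w')
    rw [smul_inv_smul₀ hτ0, smul_inv_smul₀ hτ0] at h4
    refine h4.trans ((mul_le_mul_right h3 _).trans ?_)
    rw [← enorm_eq_nnnorm, ← ofReal_norm, ← ENNReal.ofReal_mul (norm_nonneg _)]
    refine ENNReal.ofReal_le_ofReal ?_
    rw [norm_smul, norm_smul, norm_inv]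
    have e1 : ‖τ‖ * (K * (‖τ‖⁻¹ * ‖w‖) + K * (‖τ‖⁻¹ * ‖w'‖)) = K * (‖w‖ + ‖w'‖) := by
      field_simp
    rw [e1]
    have h5 : ‖w‖ ≤ ‖w - w'‖ / c := by
      rw [le_div_iff₀ hc, norm_sub_rev]; linarith
    have h6 := norm_le_norm_add_norm_sub w w'
    have h7 : ‖w‖ + ‖w'‖ ≤ (2 / c + 1) * ‖w - w'‖ := by
      have : (2 / c + 1) * ‖w - w'‖ = 2 * (‖w - w'‖ / c) + ‖w - w'‖ := by ring
      linarith
    have h8 := mul_le_mul_of_nonneg_left h7 hK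
    have : 0 ≤ C * ‖w - w'‖ := by positivity
    linarith

/-! ### The surface -/

lemma norm_pow_sub_pow_le_aux (n : ℕ) {z z' : ℂ} {m : ℝ} (hz : ‖z‖ ≤ m) (hz' : ‖z'‖ ≤ m) :
    ‖z ^ n - z' ^ n‖ ≤ n * m ^ (n - 1) * ‖z - z'‖ := by
  have hm : 0 ≤ m := (norm_nonneg z).trans hz
  rcases n with _ | n
  · simp
  induction n with
  | zero => simp
  | succ n ih =>
    simp only [Nat.add_sub_cancel] at ih ⊢
    have e : z ^ (n + 1 + 1) - z' ^ (n + 1 + 1) =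
        z * (z ^ (n + 1) - z' ^ (n + 1)) + (z - z') * z' ^ (n + 1) := by ring
    rw [e]
    refine (norm_add_le _ _).trans ?_
    rw [norm_mul, norm_mul, norm_pow]
    have h1 : ‖z‖ * ‖z ^ (n + 1) - z' ^ (n + 1)‖ ≤ m * ((n + 1 : ℕ) * m ^ n * ‖z - z'‖) := by
      gcongr
    have h2 : ‖z - z'‖ * ‖z'‖ ^ (n + 1) ≤ ‖z - z'‖ * m ^ (n + 1) := by gcongr
    refine (add_le_add h1 h2).trans (le_of_eq ?_)
    push_cast
    ring

/-- The part `‖z‖ < 1` of the surface `F w = z ^ n`. -/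
def surf (F : ℂ × ℂ → ℂ) (n : ℕ) : Set ((ℂ × ℂ) × ℂ) := {p | F p.1 = p.2 ^ n ∧ ‖p.2‖ < 1}

/-- The surface is quasihomogeneous with weights `(n, n, k)`, so a point is joined to the origin by
its orbit `s ↦ (s ^ n w, s ^ k z)`. -/
lemma innerDist_surf_zero {F : ℂ × ℂ → ℂ} {k n : ℕ} (hk : 1 ≤ k) (hkn : k ≤ n)
    (hom : ∀ (c : ℂ) w, F (c • w) = c ^ k * F w) {p : (ℂ × ℂ) × ℂ} (hp : p ∈ surf F n) :
    innerDist (surf F n) 0 p ≤ ENNReal.ofReal (n * ‖p‖) := by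
  obtain ⟨⟨w, z⟩, rfl⟩ : ∃ q : (ℂ × ℂ) × ℂ, q = p := ⟨p, rfl⟩
  obtain ⟨h1, h2⟩ := hp
  have hpow : ∀ j : ℕ, j ≤ n → ∀ s ∈ Icc (0 : ℝ) 1, ∀ s' ∈ Icc (0 : ℝ) 1,
      ‖(s : ℂ) ^ j - (s' : ℂ) ^ j‖ ≤ n * |s - s'| := fun j hj s hs s' hs' => by
    refine (norm_pow_sub_pow_le_aux j (m := 1) ?_ ?_).trans ?_
    · rw [Complex.norm_real, Real.norm_of_nonneg hs.1]; exact hs.2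
    · rw [Complex.norm_real, Real.norm_of_nonneg hs'.1]; exact hs'.2
    · rw [← Complex.ofReal_sub, Complex.norm_real, Real.norm_eq_abs, one_pow, mul_one]
      gcongr
  refine innerDist_le_of_lipschitz (γ := fun s => ((s : ℂ) ^ n • w, (s : ℂ) ^ k * z)) ?_ ?_ ?_ ?_
  · intro s hs s' hs'
    rw [Prod.mk_sub_mk, ← sub_smul, ← sub_mul, Prod.norm_mk, norm_smul, norm_mul]
    have hw : ‖w‖ ≤ ‖((w, z) : (ℂ × ℂ) × ℂ)‖ := le_max_left _ _
    have hz : ‖z‖ ≤ ‖((w, z) : (ℂ × ℂ) × ℂ)‖ := le_max_right _ _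
    rw [mul_right_comm]
    refine max_le ?_ ?_
    · exact mul_le_mul (hpow n le_rfl s hs s' hs') hw (norm_nonneg _) (by positivity)
    · exact mul_le_mul (hpow k hkn s hs s' hs') hz (norm_nonneg _) (by positivity)
  · intro s hs
    refine ⟨?_, ?_⟩
    · change F ((s : ℂ) ^ n • w) = ((s : ℂ) ^ k * z) ^ n
      rw [hom, mul_pow, ← pow_mul, ← pow_mul, mul_comm n k]
      exact congrArg _ h1
    · change ‖(s : ℂ) ^ k * z‖ < 1
      rw [norm_mul, norm_pow, Complex.norm_real, Real.norm_of_nonneg hs.1]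
      exact (mul_le_of_le_one_left (norm_nonneg _) (pow_le_one₀ hs.1 hs.2)).trans_lt h2
  · simp [show n ≠ 0 by omega, show k ≠ 0 by omega]
  · simp

/-- Lifting the segment from `z` to `z'` to the surface through the flow box at `w`. -/
lemma HasBox.innerDist_surf_le {F : ℂ × ℂ → ℂ} {k n : ℕ} {c C : ℝ} (h : HasBox F k c C)
    (hC : 1 ≤ C) {w q : ℂ × ℂ} {z z' : ℂ} {m M : ℝ} (hw : w ≠ 0) (hwz : F w = z ^ n)
    (hqz : F q = z' ^ n) (hqw : ‖q - w‖ ≤ c * ‖w‖) (hz : ‖z‖ ≤ m) (hz' : ‖z'‖ ≤ m) (hm : m < 1)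
    (hL : n * m ^ (n - 1) * ‖z - z'‖ ≤ M * ‖w‖ ^ (k - 1) * ‖z - z'‖)
    (hL' : n * m ^ (n - 1) * ‖z - z'‖ ≤ c * ‖w‖ ^ k) :
    innerDist (surf F n) (w, z) (q, z') ≤ ENNReal.ofReal (C * ((M + 1) * ‖z - z'‖ + ‖w - q‖)) := by
  have hm0 : 0 ≤ m := (norm_nonneg z).trans hz
  have hw0 : 0 < ‖w‖ := norm_pos_iff.2 hw
  set ℓ : ℝ → ℂ := fun s => z + s * (z' - z) with hℓ
  have hℓm : ∀ s ∈ Icc (0 : ℝ) 1, ‖ℓ s‖ ≤ m := fun s hs => by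
    have e : ℓ s = ((1 - s : ℝ) : ℂ) * z + (s : ℂ) * z' := by
      simp only [hℓ]; push_cast; ring
    rw [e]
    refine (norm_add_le _ _).trans ?_
    rw [norm_mul, norm_mul, Complex.norm_real, Complex.norm_real, Real.norm_of_nonneg hs.1,
      Real.norm_of_nonneg (by linarith [hs.2])]
    nlinarith [hs.1, hs.2]
  have hℓl : ∀ s s' : ℝ, ‖ℓ s - ℓ s'‖ = ‖z - z'‖ * |s - s'| := fun s s' => by
    have e : ℓ s - ℓ s' = ((s - s' : ℝ) : ℂ) * (z' - z) := by
      simp only [hℓ]; push_cast; ring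
    rw [e, norm_mul, Complex.norm_real, Real.norm_eq_abs, mul_comm, norm_sub_rev]
  have hℓ0 : ℓ 0 = z := by simp [hℓ]
  have hℓ1 : ℓ 1 = z' := by simp [hℓ]
  have hτ : ∀ s ∈ Icc (0 : ℝ) 1, ∀ s' ∈ Icc (0 : ℝ) 1, ‖ℓ s ^ n - ℓ s' ^ n‖ ≤
      n * m ^ (n - 1) * ‖z - z'‖ * |s - s'| := fun s hs s' hs' => by
    rw [mul_assoc, ← hℓl]
    exact norm_pow_sub_pow_le_aux n (hℓm s hs) (hℓm s' hs')
  obtain ⟨γ, h1, h2, h3, h4⟩ := h.path w hw q hqw (fun s => ℓ s ^ n) _ hτ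
    (by rw [hℓ0, hwz]) (by rw [hℓ1, hqz]) (fun s hs => by
      rw [hwz]
      have h5 := hτ s hs 0 (by simp)
      rw [hℓ0, sub_zero, abs_of_nonneg hs.1] at h5
      refine (h5.trans (mul_le_of_le_one_right (by positivity) hs.2)).trans hL')
  refine innerDist_le_of_lipschitz (γ := fun s => (γ s, ℓ s)) ?_ ?_ ?_ ?_
  · intro s hs s' hs'
    rw [Prod.mk_sub_mk, Prod.norm_mk]
    have h5 : n * m ^ (n - 1) * ‖z - z'‖ / ‖w‖ ^ (k - 1) ≤ M * ‖z - z'‖ := by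
      rw [div_le_iff₀ (by positivity)]
      linarith
    have h6 : 0 ≤ n * m ^ (n - 1) * ‖z - z'‖ / ‖w‖ ^ (k - 1) := by positivity
    refine max_le ((h1 s hs s' hs').trans ?_) ?_
    · gcongr
      linarith [norm_nonneg (z - z')]
    · rw [hℓl]
      gcongr
      have : 0 ≤ ‖w - q‖ := norm_nonneg _
      nlinarith [norm_nonneg (z - z')]
  · exact fun s hs => ⟨h4 s hs, (hℓm s hs).trans_lt hm⟩
  · simp [h2, hℓ0]
  · simp [h3, hℓ1]

/-- The surface is Lipschitz normally embedded. Points whose distance is comparable to their norm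
are joined through the origin; otherwise `z` is moved to `z'` in a flow box, and, when `‖w‖ < ‖z‖`,
the path is completed inside the fibre over `z'`. -/
lemma surf_lne {F : ℂ × ℂ → ℂ} {k n : ℕ} (hk : 1 ≤ k) (hkn : k ≤ n) {c C : ℝ} (h : HasBox F k c C)
    (hc : 0 < c) (hc1 : c ≤ 1) (hC : 1 ≤ C) (hom : ∀ (c : ℂ) w, F (c • w) = c ^ k * F w) {A : ℝ}
    (hA : 1 ≤ A) (hbd : ∀ w, ‖F w‖ ≤ A * ‖w‖ ^ k) {K : ℝ} (hK : 0 ≤ K)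
    (hfib : ∀ t ≠ 0, ∀ w w', F w = t → F w' = t →
      innerDist (fib F t) w w' ≤ ENNReal.ofReal (K * ‖w - w'‖)) :
    ∃ K' : ℝ, 0 ≤ K' ∧ ∀ p ∈ surf F n, ∀ p' ∈ surf F n,
      innerDist (surf F n) p p' ≤ ENNReal.ofReal (K' * ‖p - p'‖) := by
  have hn1 : (1 : ℝ) ≤ n := by exact_mod_cast hk.trans hkn
  set M : ℝ := n * 2 ^ n * A with hM
  have h2n : (1 : ℝ) ≤ 2 ^ n := one_le_pow₀ one_le_two
  have hM1 : 1 ≤ M := one_le_mul_of_one_le_of_one_le (one_le_mul_of_one_le_of_one_le hn1 h2n) hA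
  have hM0 : 0 ≤ M := by linarith
  -- `B` separates points with distance comparable to their norm from nearby ones
  set B : ℝ := C * M / c with hB
  have hcB : c * B = C * M := by rw [hB]; field_simp
  have hCM : 1 ≤ C * M := one_le_mul_of_one_le_of_one_le hC hM1
  have hB1 : 1 ≤ B := by
    rw [hB, le_div_iff₀ hc]; linarith
  have hK1 : n * (2 * B + 1) ≤ n * (2 * B + 1) + C * (M + 2 + C * M) + K * (C * M + 1) := by
    have : 0 ≤ C * (M + 2 + C * M) := by positivity
    have : 0 ≤ K * (C * M + 1) := by positivity
    linarith
  refine ⟨n * (2 * B + 1) + C * (M + 2 + C * M) + K * (C * M + 1), by positivity, ?_⟩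
  rintro ⟨w, z⟩ hp ⟨w', z'⟩ hp'
  set δ := ‖((w, z) : (ℂ × ℂ) × ℂ) - (w', z')‖ with hδ
  have hδw : ‖w - w'‖ ≤ δ := le_max_left _ _
  have hδz : ‖z - z'‖ ≤ δ := le_max_right _ _
  have hδ0 : 0 ≤ δ := norm_nonneg _
  obtain ⟨hwz, hz1⟩ := id hp
  obtain ⟨hwz', hz1'⟩ := id hp'
  simp only at hwz hz1 hwz' hz1'
  rcases le_or_gt ‖((w, z) : (ℂ × ℂ) × ℂ)‖ (B * δ) with hcase | hcase
  · -- through the origin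
    have h1 := innerDist_surf_zero hk hkn hom hp
    rw [innerDist_comm] at h1
    refine (innerDist_trans_le (by positivity) (by positivity) h1
      (innerDist_surf_zero hk hkn hom hp')).trans (ENNReal.ofReal_le_ofReal ?_)
    have h2 : ‖((w', z') : (ℂ × ℂ) × ℂ)‖ ≤ ‖((w, z) : (ℂ × ℂ) × ℂ)‖ + δ :=
      norm_le_norm_add_norm_sub _ _
    refine le_trans ?_ (mul_le_mul_of_nonneg_right hK1 hδ0)
    rw [← mul_add, mul_assoc]
    gcongr
    linarith
  have hδ' : δ ≤ B * δ := le_mul_of_one_le_left hδ0 hB1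
  have hz'z : ‖z'‖ ≤ ‖z‖ + ‖z - z'‖ := norm_le_norm_add_norm_sub _ _
  have hzz' : ‖z‖ ≤ ‖z'‖ + ‖z - z'‖ := by
    have := norm_le_norm_add_norm_sub z' z
    rwa [norm_sub_rev] at this
  set m := max ‖z‖ ‖z'‖ with hm
  have hm1 : m < 1 := max_lt hz1 hz1'
  have hm0 : 0 ≤ m := (norm_nonneg z).trans (le_max_left _ _)
  rcases le_or_gt ‖z‖ ‖w‖ with hcase2 | hcase2
  · -- `(w', z')` itself lies in the flow box
    have hpw : ‖((w, z) : (ℂ × ℂ) × ℂ)‖ = ‖w‖ := max_eq_left hcase2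
    rw [hpw] at hcase
    have hw0 : 0 < ‖w‖ := by linarith
    have hcδ : C * M * δ ≤ c * ‖w‖ := by
      rw [← hcB, mul_assoc]; gcongr
    have hMδ : M * δ ≤ c * ‖w‖ := by nlinarith [mul_nonneg hM0 hδ0]
    have hm2 : m ≤ 2 * ‖w‖ := max_le (by linarith) (by linarith)
    have h1 : n * m ^ (n - 1) ≤ M * ‖w‖ ^ (k - 1) := by
      calc n * m ^ (n - 1) ≤ n * m ^ (k - 1) := by
            gcongr n * ?_
            exact pow_le_pow_of_le_one hm0 hm1.le (by omega)
        _ ≤ n * (2 * ‖w‖) ^ (k - 1) := by gcongr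
        _ = n * 2 ^ (k - 1) * ‖w‖ ^ (k - 1) := by rw [mul_pow]; ring
        _ ≤ n * 2 ^ n * ‖w‖ ^ (k - 1) := by
            gcongr
            · norm_num
            · omega
        _ ≤ M * ‖w‖ ^ (k - 1) := by
            gcongr
            exact le_mul_of_one_le_right (by positivity) hA
    refine (h.innerDist_surf_le hC (M := M) (norm_pos_iff.1 hw0) hwz hwz' ?_ (le_max_left _ _)
      (le_max_right _ _) hm1 ?_ ?_).trans (ENNReal.ofReal_le_ofReal ?_)
    · rw [norm_sub_rev]
      nlinarith
    · gcongr
    · calc n * m ^ (n - 1) * ‖z - z'‖ ≤ M * ‖w‖ ^ (k - 1) * δ := by gcongr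
        _ = M * δ * ‖w‖ ^ (k - 1) := by ring
        _ ≤ c * ‖w‖ * ‖w‖ ^ (k - 1) := by gcongr
        _ = c * ‖w‖ ^ k := by rw [mul_assoc, mul_pow_sub_one (by omega)]
    · have h2 : C * ((M + 1) * ‖z - z'‖ + ‖w - w'‖) ≤ C * ((M + 1) * δ + δ) := by gcongr
      have h3 : 0 ≤ n * (2 * B + 1) * δ := by positivity
      have h4 : 0 ≤ C * (C * M) * δ := by positivity
      have h5 : 0 ≤ K * (C * M + 1) * δ := by positivity
      linarith
  · have hpw : ‖((w, z) : (ℂ × ℂ) × ℂ)‖ = ‖z‖ := max_eq_right hcase2.le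
    rw [hpw] at hcase
    have hz0 : 0 < ‖z‖ := by linarith
    have hz'0 : z' ≠ 0 := by
      rintro rfl
      rw [norm_zero] at hzz'
      linarith
    have hzA : ‖z‖ ^ n ≤ A * ‖w‖ ^ k := by
      rw [← norm_pow, ← hwz]; exact hbd w
    have hw0 : w ≠ 0 := by
      rintro rfl
      rw [norm_zero, zero_pow (by omega), mul_zero] at hzA
      exact absurd hzA (not_le.2 (by positivity))
    have hw0' : 0 < ‖w‖ := norm_pos_iff.2 hw0
    have hcδ : C * M * δ ≤ c * ‖z‖ := by
      rw [← hcB, mul_assoc]; gcongr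
    have hm2 : m ≤ 2 * ‖z‖ := max_le (by linarith) (by linarith)
    -- from `(‖z‖ ^ (n - 1)) ^ k ≤ (‖z‖ ^ n) ^ (k - 1)`, as `k ≤ n` and `‖z‖ < 1`
    have hzA' : ‖z‖ ^ (n - 1) ≤ A * ‖w‖ ^ (k - 1) := by
      refine le_of_pow_le_pow_left₀ (n := k) (by omega) (by positivity) ?_
      calc (‖z‖ ^ (n - 1)) ^ k = ‖z‖ ^ ((n - 1) * k) := by rw [pow_mul]
        _ ≤ ‖z‖ ^ (n * (k - 1)) := by
            refine pow_le_pow_of_le_one hz0.le hz1.le ?_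
            rw [Nat.mul_sub, Nat.sub_mul]
            omega
        _ = (‖z‖ ^ n) ^ (k - 1) := by rw [pow_mul]
        _ ≤ (A * ‖w‖ ^ k) ^ (k - 1) := by gcongr
        _ = A ^ (k - 1) * (‖w‖ ^ (k - 1)) ^ k := by
            rw [mul_pow, ← pow_mul, ← pow_mul, mul_comm k]
        _ ≤ A ^ k * (‖w‖ ^ (k - 1)) ^ k := by
            gcongr
            omega
        _ = _ := by rw [mul_pow]
    have h0 : n * m ^ (n - 1) ≤ n * 2 ^ n * ‖z‖ ^ (n - 1) := by
      calc n * m ^ (n - 1) ≤ n * (2 * ‖z‖) ^ (n - 1) := by gcongr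
        _ = n * 2 ^ (n - 1) * ‖z‖ ^ (n - 1) := by rw [mul_pow]; ring
        _ ≤ _ := by
            gcongr
            · norm_num
            · omega
    have h1 : n * m ^ (n - 1) ≤ M * ‖w‖ ^ (k - 1) := by
      refine h0.trans ?_
      rw [hM, mul_assoc _ A]
      gcongr
    have h2 : C * (n * m ^ (n - 1) * ‖z - z'‖) ≤ c * ‖w‖ ^ k := by
      refine le_of_mul_le_mul_left (a := A) ?_ (by linarith)
      calc A * (C * (n * m ^ (n - 1) * ‖z - z'‖))
          ≤ A * (C * (n * 2 ^ n * ‖z‖ ^ (n - 1) * δ)) := by gcongr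
        _ = C * M * δ * ‖z‖ ^ (n - 1) := by rw [hM]; ring
        _ ≤ c * ‖z‖ * ‖z‖ ^ (n - 1) := by gcongr
        _ = c * ‖z‖ ^ n := by rw [mul_assoc, mul_pow_sub_one (by omega)]
        _ ≤ c * (A * ‖w‖ ^ k) := by gcongr
        _ = _ := by ring
    have h3 : n * m ^ (n - 1) * ‖z - z'‖ ≤ c * ‖w‖ ^ k :=
      (le_mul_of_one_le_left (by positivity) hC).trans h2
    have hzn : ‖z' ^ n - F w‖ ≤ n * m ^ (n - 1) * ‖z - z'‖ := by
      rw [hwz, norm_sub_rev]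
      exact norm_pow_sub_pow_le_aux n (le_max_left _ _) (le_max_right _ _)
    -- first go from `(w, z)` to a point `(w'', z')` near it, then to `(w', z')` inside the fibre
    obtain ⟨w'', hw'', h4⟩ := h.point w hw0 (z' ^ n) (hzn.trans h3)
    have h5 : ‖w'' - w‖ ≤ C * M * δ := by
      refine h4.trans ?_
      rw [mul_assoc]
      gcongr
      rw [div_le_iff₀ (by positivity)]
      calc _ ≤ _ := hzn
        _ ≤ M * ‖w‖ ^ (k - 1) * δ := by gcongr
        _ = _ := by ring
    have h6 : ‖w'' - w‖ ≤ c * ‖w‖ := by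
      refine h4.trans ?_
      rw [← mul_div_assoc, div_le_iff₀ (by positivity), mul_assoc, mul_pow_sub_one (by omega)]
      exact le_trans (by gcongr) h2
    have h7 := h.innerDist_surf_le hC (M := M) hw0 hwz hw'' h6 (le_max_left _ _)
      (le_max_right _ _) hm1 (by gcongr) h3
    have h8 : innerDist (surf F n) (w'', z') (w', z') ≤ ENNReal.ofReal (K * ‖w'' - w'‖) := by
      have h9 := innerDist_image_le (X := fib F (z' ^ n)) (Y := surf F n)
        (LipschitzWith.prodMk_right z') one_ne_zero (fun u (hu : F u = z' ^ n) => ⟨hu, hz1'⟩) w'' w'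
      rw [ENNReal.coe_one, one_mul] at h9
      exact h9.trans (hfib _ (pow_ne_zero _ hz'0) _ _ hw'' hwz')
    refine (innerDist_trans_le (by positivity) (by positivity) h7 h8).trans
      (ENNReal.ofReal_le_ofReal ?_)
    have h9 : ‖w'' - w'‖ ≤ C * M * δ + δ :=
      (norm_sub_le_norm_sub_add_norm_sub w'' w w').trans (add_le_add h5 hδw)
    rw [norm_sub_rev] at h5
    have h10 : C * ((M + 1) * ‖z - z'‖ + ‖w - w''‖) ≤ C * ((M + 1) * δ + C * M * δ) := by gcongr
    have h11 : K * ‖w'' - w'‖ ≤ K * (C * M * δ + δ) := by gcongr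
    have h12 : 0 ≤ n * (2 * B + 1) * δ := by positivity
    have h13 : 0 ≤ C * δ := by positivity
    linarith

end Flow

/-! ### Euclidean coordinates -/

/-- The identification of `(ℂ × ℂ) × ℂ`, with its sup norm, with Euclidean space. -/
noncomputable def coord (p : (ℂ × ℂ) × ℂ) : EuclideanSpace ℂ (Fin 3) := !₂[p.1.1, p.1.2, p.2]

lemma exists_lipschitz_coord : ∃ L : NNReal, 1 ≤ L ∧ LipschitzWith L coord := by
  let Φ : (ℂ × ℂ) × ℂ →ₗ[ℂ] EuclideanSpace ℂ (Fin 3) :=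
    { toFun := coord
      map_add' := fun p q => by ext i; fin_cases i <;> simp [coord]
      map_smul' := fun t p => by ext i; fin_cases i <;> simp [coord] }
  exact ⟨max ‖Φ.toContinuousLinearMap‖₊ 1, le_max_right _ _,
    Φ.toContinuousLinearMap.lipschitz.weaken (le_max_left _ _)⟩

theorem stmt13 (n k : ℕ) (hk : 1 ≤ k) (hnk : k ≤ n)
    (a b : Fin k → ℂ) (ha : ∀ i, a i ≠ 0) (hb : ∀ i, b i ≠ 0)
    (hdistinct : ∀ i j, i ≠ j → a i * b j - a j * b i ≠ 0) :
    ∃ U ∈ nhds (0 : EuclideanSpace ℂ (Fin 3)),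
      IsLNE ({p : EuclideanSpace ℂ (Fin 3) |
        (∏ i : Fin k, (a i * p 0 + b i * p 1)) - (p 2) ^ n = 0} ∩ U) := by
  have hom := form_smul a b
  obtain ⟨c, C, hc, hc1, hC, h⟩ := exists_hasBox hk (form_contDiff a b)
    (fun w hw => form_fderiv_ne_zero hk hdistinct ha hw) hom
  obtain ⟨A, hA, hbd⟩ := form_bound a b
  obtain ⟨e, -, he⟩ := form_fib_one_connected hk hb hdistinct h hc
  obtain ⟨K₁, hK₁, h₁⟩ :=
    h.fib_one_bound hk hc hc1 hC (form_contDiff a b).continuous hom hA hbd he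
  obtain ⟨K₂, hK₂, h₂⟩ := exists_fib_lne hk h hc hC hom hK₁ h₁
  obtain ⟨K, hK, h₃⟩ := surf_lne hk hnk h hc hc1 hC hom hA hbd hK₂ h₂
  obtain ⟨L, hL1, hΦ⟩ := exists_lipschitz_coord
  have hopen : IsOpen {p : EuclideanSpace ℂ (Fin 3) | ‖p 2‖ < 1} :=
    isOpen_lt (by fun_prop) continuous_const
  refine ⟨{p | ‖p 2‖ < 1}, hopen.mem_nhds (by simp), L * K + 1, ?_, ?_⟩
  · have : 0 ≤ L * K := by positivity
    linarith
  rintro x ⟨hx, hx1⟩ y ⟨hy, hy1⟩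
  have hinv : ∀ x : EuclideanSpace ℂ (Fin 3), coord ((x 0, x 1), x 2) = x := fun x => by
    ext i; fin_cases i <;> simp [coord]
  have key := innerDist_image_le (X := surf (form a b) n)
    (Y := {p : EuclideanSpace ℂ (Fin 3) |
        (∏ i : Fin k, (a i * p 0 + b i * p 1)) - (p 2) ^ n = 0} ∩ {p | ‖p 2‖ < 1})
    hΦ (by positivity) (fun p hp => ⟨by simpa [coord, form, sub_eq_zero] using hp.1,
      by simpa [coord] using hp.2⟩) ((x 0, x 1), x 2) ((y 0, y 1), y 2)
  rw [hinv, hinv] at key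
  have hS : ∀ x : EuclideanSpace ℂ (Fin 3),
      (∏ i : Fin k, (a i * x 0 + b i * x 1)) - (x 2) ^ n = 0 → ‖x 2‖ < 1 → ((x 0, x 1), x 2) ∈ surf (form a b) n :=
    fun x h1 h2 => ⟨by simpa only [form] using sub_eq_zero.1 h1, h2⟩
  have h₄ := h₃ _ (hS x hx hx1) _ (hS y hy hy1)
  refine key.trans (le_trans (by gcongr) (b := (L : ℝ≥0∞) * ENNReal.ofReal
    (K * ‖(((x 0, x 1), x 2) : (ℂ × ℂ) × ℂ) - ((y 0, y 1), y 2)‖)) ?_)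
  rw [← ENNReal.ofReal_coe_nnreal, ← ENNReal.ofReal_mul L.coe_nonneg]
  refine ENNReal.ofReal_le_ofReal ?_
  have hn : ‖(((x 0, x 1), x 2) : (ℂ × ℂ) × ℂ) - ((y 0, y 1), y 2)‖ ≤ ‖x - y‖ := by
    have := fun i => PiLp.norm_apply_le (x - y) i
    exact max_le (max_le (this 0) (this 1)) (this 2)
  calc (L : ℝ) * (K * ‖(((x 0, x 1), x 2) : (ℂ × ℂ) × ℂ) - ((y 0, y 1), y 2)‖)
      ≤ L * (K * ‖x - y‖) := by gcongr
    _ ≤ (L * K + 1) * ‖x - y‖ := by linarith [norm_nonneg (x - y)]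
end

section
/- Let f(x,y,z) = y⁴ + z⁴ + x²(y+2z)(y+3z)² + (x+y+z)¹¹ and X = {(x,y,z) ∈ ℂ³ : f(x,y,z) = 0}. Then: (i) X has an isolated singularity at 0, i.e., there is a neighborhood U of 0 in ℂ³ such that 0 is the only point of X ∩ U at which the gradient of f vanishes; (ii) the tangent cone of X at 0, namely the set T = {(x,y,z) ∈ ℂ³ : y⁴ + z⁴ = 0}, is Lipschitz Normally Embedded; and yet (iii) the germ of X at 0 is not Lipschitz Normally Embedded: for every neighborhood U of 0 in ℂ³, the set X ∩ U is not Lipschitz Normally Embedded. -/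
/-!
The three parts are independent.

*Isolated singularity.* On a common zero of the polynomial and its gradient, Euler's relation
leaves only `x + y + z = 0` or `14 (x + y + z) = 11 x`. The first case gives `y = z = 0` because
`y⁴ + z⁴` and the cubic `C = (y+2z)(y+3z)²` are coprime. In the second, `C` and `y⁴ + z⁴` are
multiples of `x⁹` and `x¹¹` with `x` comparable to `y + z`, which near the origin violates the
quantitative form `bezout_bound` of their coprimality.

*Tangent cone.* It is a union of four complex planes through the `x`-axis. The distance of a point
to the axis is bounded by a multiple of its distance to the other planes, so that the detour
through the axis has length comparable to the distance (`cone_isLNE`).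

*Failure of LNE.* With `x = s⁴ X`, `y = s¹⁰ Y`, `z = s¹⁰ Z`, the equation of the surface reads
`X² (Y+2Z) (Y+3Z)² = -s² (Y⁴ + Z⁴ + O(s⁴))`. Near `(X, Y, Z) = (1, -3, 1)` this says that
`(Y+3Z)²` is approximately `82 s²`, so `Re (Y+3Z)` cannot vanish there (`signs_near`). The surface
contains, for each small `s > 0`, two points near `(1, -3, 1)` at which `Y + 3Z` is real, of size
`O(s)` and of opposite signs (`arcValue_roots`). Their distance is `O(s¹¹)`, but a path in the
surface joining them has to leave the neighbourhood of `(1, -3, 1)`, hence has length at least a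
multiple of `s¹⁰`.
-/

open scoped ENNReal

/-! ### The isolated singularity -/

/-- The quartic `y⁴ + z⁴` and the cubic `(y+2z)(y+3z)²` are coprime forms; a Bézout identity for
them bounds the size of `(y, z)` by their values. -/
lemma bezout_bound (y z : ℂ) (m : ℝ) (hy : ‖y‖ ≤ m) (hz : ‖z‖ ≤ m) :
    ‖y‖ ^ 6 ≤ 3 * m ^ 2 * ‖y ^ 4 + z ^ 4‖ + m ^ 3 * ‖(y + 2 * z) * (y + 3 * z) ^ 2‖ ∧
    ‖z‖ ^ 6 ≤ 3 * m ^ 2 * ‖y ^ 4 + z ^ 4‖ + m ^ 3 * ‖(y + 2 * z) * (y + 3 * z) ^ 2‖ := by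
  have hm : 0 ≤ m := (norm_nonneg y).trans hy
  have h2 : ∀ a b c : ℝ, |a| + |b| + |c| ≤ 3 * 114308 →
      ‖(a : ℂ) * y ^ 2 + b * (y * z) + c * z ^ 2‖ ≤ 3 * 114308 * m ^ 2 := by
    intro a b c h
    have e1 : ‖y ^ 2‖ ≤ m ^ 2 := by rw [norm_pow]; gcongr
    have e2 : ‖y * z‖ ≤ m ^ 2 := by rw [norm_mul, pow_two]; gcongr
    have e3 : ‖z ^ 2‖ ≤ m ^ 2 := by rw [norm_pow]; gcongr
    calc _ ≤ ‖(a : ℂ) * y ^ 2‖ + ‖b * (y * z)‖ + ‖c * z ^ 2‖ := norm_add₃_le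
      _ ≤ |a| * m ^ 2 + |b| * m ^ 2 + |c| * m ^ 2 := by
        simp only [norm_mul _ (y ^ 2), norm_mul _ (y * z), norm_mul _ (z ^ 2),
          Complex.norm_real, Real.norm_eq_abs]
        gcongr
      _ = (|a| + |b| + |c|) * m ^ 2 := by ring
      _ ≤ _ := by gcongr
  have h3 : ∀ a b c d : ℝ, |a| + |b| + |c| + |d| ≤ 114308 →
      ‖(a : ℂ) * y ^ 3 + b * (y ^ 2 * z) + c * (y * z ^ 2) + d * z ^ 3‖ ≤ 114308 * m ^ 3 := by
    intro a b c d h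
    have e1 : ‖y ^ 3‖ ≤ m ^ 3 := by rw [norm_pow]; gcongr
    have e2 : ‖y ^ 2 * z‖ ≤ m ^ 3 := by
      rw [norm_mul, norm_pow, pow_succ m]; gcongr
    have e3 : ‖y * z ^ 2‖ ≤ m ^ 3 := by
      rw [norm_mul, norm_pow, pow_succ' m]; gcongr
    have e4 : ‖z ^ 3‖ ≤ m ^ 3 := by rw [norm_pow]; gcongr
    calc _ ≤ ‖(a : ℂ) * y ^ 3‖ + ‖b * (y ^ 2 * z)‖ + ‖c * (y * z ^ 2)‖ + ‖d * z ^ 3‖ :=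
          norm_add₄_le
      _ ≤ |a| * m ^ 3 + |b| * m ^ 3 + |c| * m ^ 3 + |d| * m ^ 3 := by
        simp only [norm_mul _ (y ^ 3), norm_mul _ (y ^ 2 * z), norm_mul _ (y * z ^ 2),
          norm_mul _ (z ^ 3), Complex.norm_real, Real.norm_eq_abs]
        gcongr
      _ = (|a| + |b| + |c| + |d|) * m ^ 3 := by ring
      _ ≤ _ := by gcongr
  have key : ∀ w A B : ℂ, ‖A‖ ≤ 3 * 114308 * m ^ 2 → ‖B‖ ≤ 114308 * m ^ 3 →
      114308 * w ^ 6 = A * (y ^ 4 + z ^ 4) + B * ((y + 2 * z) * (y + 3 * z) ^ 2) →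
      ‖w‖ ^ 6 ≤ 3 * m ^ 2 * ‖y ^ 4 + z ^ 4‖ + m ^ 3 * ‖(y + 2 * z) * (y + 3 * z) ^ 2‖ := by
    intro w A B hA hB h
    have h' := congrArg norm h
    have h4 := norm_add_le (A * (y ^ 4 + z ^ 4)) (B * ((y + 2 * z) * (y + 3 * z) ^ 2))
    rw [← h', norm_mul A, norm_mul B, norm_mul, norm_pow] at h4
    have e : ‖(114308 : ℂ)‖ = 114308 := by simp
    rw [e] at h4
    have h5 := mul_le_mul_of_nonneg_right hA (norm_nonneg (y ^ 4 + z ^ 4))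
    have h6 := mul_le_mul_of_nonneg_right hB (norm_nonneg ((y + 2 * z) * (y + 3 * z) ^ 2))
    linarith
  constructor
  · refine key y _ _ (h2 108118 (-45300) (-92736) ?_) (h3 6190 (-4220) (-3494) 5152 ?_) ?_
    · norm_num [abs_of_pos, abs_of_neg]
    · norm_num [abs_of_pos, abs_of_neg]
    · push_cast; ring
  · refine key z _ _ (h2 3494 22800 38348 ?_) (h3 (-3494) 5152 (-6190) 4220 ?_) ?_
    · norm_num [abs_of_pos, abs_of_neg]
    · norm_num [abs_of_pos, abs_of_neg]
    · push_cast; ring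

lemma forms_coprime {y z : ℂ} (hP : y ^ 4 + z ^ 4 = 0)
    (hC : (y + 2 * z) * (y + 3 * z) ^ 2 = 0) : y = 0 ∧ z = 0 := by
  obtain ⟨h1, h2⟩ := bezout_bound y z (max ‖y‖ ‖z‖) (le_max_left _ _) (le_max_right _ _)
  rw [hP, hC] at h1 h2
  simp only [norm_zero, mul_zero, add_zero] at h1 h2
  constructor
  · exact norm_eq_zero.1 (pow_eq_zero_iff (by norm_num) |>.1 (le_antisymm h1 (by positivity)))
  · exact norm_eq_zero.1 (pow_eq_zero_iff (by norm_num) |>.1 (le_antisymm h2 (by positivity)))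

/-- A common zero of the polynomial and its three partial derivatives that lies close to the
origin is the origin. The Euler combination `x ∂ₓ + y ∂_y + z ∂_z`, compared with the value of the
polynomial and with `x ∂ₓ`, forces `x + y + z = 0` or `14 (x + y + z) = 11 x`. In the second case
`y⁴ + z⁴ = O(x¹¹)` and `(y+2z)(y+3z)² = O(x⁹)`, whereas `x = O(max |y| |z|)`; this contradicts the
sixth-power bound `bezout_bound`. -/
lemma singular_point (x y z : ℂ) (hy : ‖y‖ ≤ 1 / 1000) (hz : ‖z‖ ≤ 1 / 1000)
    (h : y ^ 4 + z ^ 4 + x ^ 2 * (y + 2 * z) * (y + 3 * z) ^ 2 + (x + y + z) ^ 11 = 0)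
    (h0 : 2 * x * ((y + 2 * z) * (y + 3 * z) ^ 2) + 11 * (x + y + z) ^ 10 = 0)
    (h1 : 4 * y ^ 3 + x ^ 2 * ((y + 3 * z) ^ 2 + 2 * (y + 2 * z) * (y + 3 * z))
      + 11 * (x + y + z) ^ 10 = 0)
    (h2 : 4 * z ^ 3 + x ^ 2 * (2 * (y + 3 * z) ^ 2 + 6 * (y + 2 * z) * (y + 3 * z))
      + 11 * (x + y + z) ^ 10 = 0) : x = 0 ∧ y = 0 ∧ z = 0 := by
  have hL : (x + y + z) ^ 10 * (14 * (x + y + z) - 11 * x) = 0 := by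
    linear_combination 2 * (x * h0 + y * h1 + z * h2) - 8 * h - x * h0
  -- the case `x + y + z = 0`
  have caseL : x + y + z = 0 → x = 0 ∧ y = 0 ∧ z = 0 := by
    intro hl
    have hxC : x * ((y + 2 * z) * (y + 3 * z) ^ 2) = 0 := by
      rw [hl] at h0
      linear_combination h0 / 2
    have hP : y ^ 4 + z ^ 4 = 0 := by
      rw [hl] at h
      linear_combination h - x * hxC
    rcases mul_eq_zero.1 hxC with hx | hC
    · have hyz : y = -z := by linear_combination hl - hx
      have hz0 : z = 0 := by
        rw [hyz] at hP
        have : z ^ 4 = 0 := by linear_combination hP / 2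
        simpa using this
      exact ⟨hx, by rw [hyz, hz0, neg_zero], hz0⟩
    · obtain ⟨hy0, hz0⟩ := forms_coprime hP hC
      exact ⟨by linear_combination hl - hy0 - hz0, hy0, hz0⟩
  rcases mul_eq_zero.1 hL with hl | hl
  · exact caseL (by simpa using hl)
  by_cases hx : x = 0
  · exact caseL (by rw [hx] at hl ⊢; linear_combination hl / 14)
  exfalso
  have hLx : x + y + z = 11 / 14 * x := by linear_combination hl / 14
  have hC : (y + 2 * z) * (y + 3 * z) ^ 2 = -(11 / 2 * (11 / 14) ^ 10) * x ^ 9 := by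
    rw [hLx] at h0
    apply mul_left_cancel₀ hx
    linear_combination h0 / 2
  have hP : y ^ 4 + z ^ 4 = (11 / 2 * (11 / 14) ^ 10 - (11 / 14) ^ 11) * x ^ 11 := by
    rw [hLx] at h
    linear_combination h - x ^ 2 * hC
  have nC : ‖(y + 2 * z) * (y + 3 * z) ^ 2‖ ≤ ‖x‖ ^ 9 := by
    rw [hC, norm_mul, norm_pow]
    have : ‖(-(11 / 2 * (11 / 14) ^ 10) : ℂ)‖ ≤ 1 := by
      rw [norm_neg]; norm_num
    nlinarith [pow_nonneg (norm_nonneg x) 9]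
  have nP : ‖y ^ 4 + z ^ 4‖ ≤ ‖x‖ ^ 11 := by
    rw [hP, norm_mul, norm_pow]
    have : ‖((11 / 2 * (11 / 14) ^ 10 - (11 / 14) ^ 11) : ℂ)‖ ≤ 1 := by
      norm_num
    nlinarith [pow_nonneg (norm_nonneg x) 11]
  set m := max ‖y‖ ‖z‖ with hm
  have hym : ‖y‖ ≤ m := le_max_left _ _
  have hzm : ‖z‖ ≤ m := le_max_right _ _
  have hm1 : m ≤ 1 / 1000 := max_le hy hz
  have hxm : ‖x‖ ≤ 10 * m := by
    have : x = -(14 / 3) * (y + z) := by linear_combination 14 / 3 * hLx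
    rw [this, norm_mul, norm_neg]
    have e : ‖(14 / 3 : ℂ)‖ = 14 / 3 := by norm_num
    rw [e]
    linarith [norm_add_le y z, norm_nonneg y]
  have hmpos : 0 < m := by
    have : 0 < ‖x‖ := norm_pos_iff.2 hx
    linarith
  have hb := bezout_bound y z m hym hzm
  have hbound : 3 * m ^ 2 * ‖y ^ 4 + z ^ 4‖ + m ^ 3 * ‖(y + 2 * z) * (y + 3 * z) ^ 2‖ < m ^ 6 := by
    calc _ ≤ 3 * m ^ 2 * (10 * m) ^ 11 + m ^ 3 * (10 * m) ^ 9 := by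
          gcongr
          · exact nP.trans (by gcongr)
          · exact nC.trans (by gcongr)
      _ = m ^ 6 * (3 * 10 ^ 11 * m ^ 7 + 10 ^ 9 * m ^ 6) := by ring
      _ ≤ m ^ 6 * (3 * 10 ^ 11 * (1 / 1000) ^ 7 + 10 ^ 9 * (1 / 1000) ^ 6) := by gcongr
      _ < m ^ 6 * 1 := by gcongr; norm_num
      _ = m ^ 6 := mul_one _
  rcases le_total ‖y‖ ‖z‖ with hle | hle
  · rw [hm, max_eq_right hle] at *
    linarith [hb.2]
  · rw [hm, max_eq_left hle] at *
    linarith [hb.1]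

lemma isolated (f : EuclideanSpace ℂ (Fin 3) → ℂ)
    (hf : ∀ p, f p = (p 1) ^ 4 + (p 2) ^ 4
        + (p 0) ^ 2 * (p 1 + 2 * p 2) * (p 1 + 3 * p 2) ^ 2
        + (p 0 + p 1 + p 2) ^ 11) :
    ∃ U ∈ nhds (0 : EuclideanSpace ℂ (Fin 3)),
        ∀ p ∈ {q : EuclideanSpace ℂ (Fin 3) | f q = 0} ∩ U,
          fderiv ℂ f p = 0 → p = 0 := by
  refine ⟨Metric.closedBall 0 (1 / 1000), Metric.closedBall_mem_nhds _ (by norm_num), ?_⟩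
  rintro p ⟨hp, hpU⟩ hd
  rw [mem_closedBall_zero_iff] at hpU
  have hfd : Differentiable ℂ f := by
    have : f = fun p => (p 1) ^ 4 + (p 2) ^ 4
        + (p 0) ^ 2 * (p 1 + 2 * p 2) * (p 1 + 3 * p 2) ^ 2
        + (p 0 + p 1 + p 2) ^ 11 := funext hf
    rw [this]
    fun_prop
  have hline : ∀ v : EuclideanSpace ℂ (Fin 3),
      HasDerivAt (fun t : ℂ => f (p + t • v)) 0 0 := by
    intro v
    have h1 : HasDerivAt (fun t : ℂ => p + t • v) v 0 := by
      simpa using ((hasDerivAt_id (0 : ℂ)).smul_const v).const_add p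
    have h2 : HasFDerivAt f (fderiv ℂ f p) (p + (0 : ℂ) • v) := by
      simpa using (hfd p).hasFDerivAt
    have := h2.comp_hasDerivAt 0 h1
    rw [hd, zero_apply] at this
    exact this
  have hcoef : ∀ v : EuclideanSpace ℂ (Fin 3),
      4 * (p 1) ^ 3 * v 1 + 4 * (p 2) ^ 3 * v 2
        + 2 * p 0 * v 0 * ((p 1 + 2 * p 2) * (p 1 + 3 * p 2) ^ 2)
        + (p 0) ^ 2 * ((v 1 + 2 * v 2) * (p 1 + 3 * p 2) ^ 2
          + 2 * (v 1 + 3 * v 2) * (p 1 + 2 * p 2) * (p 1 + 3 * p 2))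
        + 11 * (p 0 + p 1 + p 2) ^ 10 * (v 0 + v 1 + v 2) = 0 := by
    intro v
    have hl := hline v
    have hc : ∀ i, HasDerivAt (fun t : ℂ => p i + t * v i) (v i) 0 := by
      intro i
      simpa using ((hasDerivAt_id (0 : ℂ)).mul_const (v i)).const_add (p i)
    have h2 := ((((hc 1).pow 4).add ((hc 2).pow 4)).add
      ((((hc 0).pow 2).mul ((hc 1).add ((hc 2).const_mul 2))).mul
        (((hc 1).add ((hc 2).const_mul 3)).pow 2))).add
      ((((hc 0).add (hc 1)).add (hc 2)).pow 11)
    have hl' := hl.congr_of_eventuallyEq (f₁ := _) (Filter.Eventually.of_forall fun t => (hf (p + t • v)).symm)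
    have := h2.unique hl'
    simp at this
    linear_combination this
  have e0 := hcoef (EuclideanSpace.single 0 1)
  have e1 := hcoef (EuclideanSpace.single 1 1)
  have e2 := hcoef (EuclideanSpace.single 2 1)
  simp at e0 e1 e2
  have hz := singular_point (p 0) (p 1) (p 2)
    ((PiLp.norm_apply_le p 1).trans hpU) ((PiLp.norm_apply_le p 2).trans hpU)
    (by rw [← hf]; exact hp) (by linear_combination e0) (by linear_combination e1)
    (by linear_combination e2)
  ext i
  fin_cases i
  · exact hz.1
  · exact hz.2.1
  · exact hz.2.2

/-! ### The tangent cone -/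

lemma norm_le_sum_three (p : EuclideanSpace ℂ (Fin 3)) :
    ‖p‖ ≤ ‖p 0‖ + ‖p 1‖ + ‖p 2‖ := by
  rw [EuclideanSpace.norm_eq, Real.sqrt_le_iff, Fin.sum_univ_three]
  have h0 := norm_nonneg (p 0)
  have h1 := norm_nonneg (p 1)
  have h2 := norm_nonneg (p 2)
  exact ⟨by positivity, by nlinarith [mul_nonneg h0 h1, mul_nonneg h0 h2, mul_nonneg h1 h2]⟩

/-- A path with Lipschitz constant `C`, parametrised by `[0,1]`, has length at most `C`. -/
lemma innerDist_le_of_lipschitz_s15 {E : Type*} [NormedAddCommGroup E] (X : Set E) (γ : ℝ → E)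
    (C : ℝ) (hC : 0 ≤ C) (hγ : ∀ s t, ‖γ s - γ t‖ ≤ C * |s - t|)
    (hX : Set.MapsTo γ (Set.Icc 0 1) X) :
    innerDist X (γ 0) (γ 1) ≤ ENNReal.ofReal C := by
  have hl : LipschitzWith C.toNNReal γ := by
    refine LipschitzWith.of_dist_le_mul fun s t => ?_
    rw [dist_eq_norm, Real.dist_eq, Real.coe_toNNReal _ hC]
    exact hγ s t
  have h1 : innerDist X (γ 0) (γ 1) ≤ eVariationOn γ (Set.Icc 0 1) :=
    iInf_le_of_le γ <| iInf_le_of_le hl.continuous.continuousOn <| iInf_le_of_le hX <|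
      iInf_le_of_le rfl <| iInf_le_of_le rfl le_rfl
  have h2 : eVariationOn (γ ∘ id) (Set.Icc (0 : ℝ) 1)
      ≤ C.toNNReal * eVariationOn (id : ℝ → ℝ) (Set.Icc 0 1) :=
    (hl.lipschitzOnWith (s := Set.univ)).comp_eVariationOn_le (Set.mapsTo_univ _ _)
  have h3 : eVariationOn (id : ℝ → ℝ) (Set.Icc 0 1) ≤ ENNReal.ofReal 1 := by
    have := (monotone_id.monotoneOn (Set.Icc (0 : ℝ) 1)).eVariationOn_eq
      (a := 0) (b := 1) (by simp) (by simp)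
    rw [Set.inter_self] at this
    simp [this]
  calc _ ≤ _ := h1
    _ ≤ _ := h2
    _ ≤ C.toNNReal * ENNReal.ofReal 1 := by gcongr
    _ = _ := by simp [ENNReal.ofReal]

lemma norm_eq_one_of_pow_four {u : ℂ} (hu : u ^ 4 = -1) : ‖u‖ = 1 := by
  have := congrArg norm hu
  rw [norm_pow, norm_neg, norm_one] at this
  exact (pow_eq_one_iff_of_nonneg (norm_nonneg u) (by norm_num)).1 this

lemma one_le_norm_sub_of_pow_four {a b : ℂ} (ha : a ^ 4 = -1) (hb : b ^ 4 = -1) (hab : a ≠ b) :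
    1 ≤ ‖a - b‖ := by
  have na := norm_eq_one_of_pow_four ha
  have nb := norm_eq_one_of_pow_four hb
  have h : (a + b) * (a ^ 2 + b ^ 2) = 0 :=
    mul_left_cancel₀ (sub_ne_zero.2 hab) (by linear_combination ha - hb)
  rcases mul_eq_zero.1 h with h | h
  · have : a - b = 2 * a := by linear_combination -h
    rw [this, norm_mul, na]
    norm_num
  · have h2 : (a - b) ^ 2 = -(2 * (a * b)) := by linear_combination h
    have h3 := congrArg norm h2
    rw [norm_pow, norm_neg, norm_mul, norm_mul, na, nb] at h3
    norm_num at h3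
    nlinarith [norm_nonneg (a - b)]

lemma exists_line {y z : ℂ} (h : y ^ 4 + z ^ 4 = 0) : ∃ w : ℂ, w ^ 4 = -1 ∧ y = w * z := by
  by_cases hz : z = 0
  · obtain ⟨w, hw⟩ := IsAlgClosed.exists_pow_nat_eq (-1 : ℂ) (n := 4) (by norm_num)
    subst hz
    have hy : y = 0 := by simpa using h
    exact ⟨w, hw, by simp [hy]⟩
  · refine ⟨y / z, ?_, by field_simp⟩
    field_simp
    linear_combination h

/-- The distance from a point on the line `y = w z` to the origin is controlled by its distance
to any point on another of the four lines `y = v z`. -/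
lemma norm_le_of_lines {y z y' z' w v : ℂ} {D : ℝ} (hw : w ^ 4 = -1) (hv : v ^ 4 = -1)
    (hwv : w ≠ v) (h : y = w * z) (h' : y' = v * z') (hy : ‖y - y'‖ ≤ D) (hz : ‖z - z'‖ ≤ D) :
    ‖y‖ + ‖z‖ ≤ 4 * D := by
  have e : (w - v) * z = (y - y') - v * (z - z') := by rw [h, h']; ring
  have e2 := congrArg norm e
  rw [norm_mul] at e2
  have e3 := norm_sub_le (y - y') (v * (z - z'))
  rw [norm_mul, norm_eq_one_of_pow_four hv, one_mul] at e3
  have e4 := mul_le_mul_of_nonneg_right (one_le_norm_sub_of_pow_four hw hv hwv) (norm_nonneg z)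
  have e5 : ‖y‖ = ‖z‖ := by rw [h, norm_mul, norm_eq_one_of_pow_four hw, one_mul]
  linarith

/-- Four complex planes through the `x`-axis. Points of the same plane are joined by a segment;
points of different planes are joined through the axis, at a cost controlled by the distance
because the planes are transverse within `{x = const}`. -/
lemma cone_isLNE : IsLNE {p : EuclideanSpace ℂ (Fin 3) | (p 1) ^ 4 + (p 2) ^ 4 = 0} := by
  refine ⟨17, by norm_num, fun p hp q hq => ?_⟩
  have hp4 : (p 1) ^ 4 + (p 2) ^ 4 = 0 := hp
  have hq4 : (q 1) ^ 4 + (q 2) ^ 4 = 0 := hq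
  obtain ⟨w, hw, hpw⟩ := exists_line hp
  obtain ⟨v, hv, hqv⟩ := exists_line hq
  have hD : 0 ≤ ‖p - q‖ := norm_nonneg _
  have hi : ∀ i, ‖p i - q i‖ ≤ ‖p - q‖ := fun i => PiLp.norm_apply_le (p - q) i
  by_cases hwv : w = v
  · subst hwv
    have := innerDist_le_of_lipschitz_s15 {p : EuclideanSpace ℂ (Fin 3) | (p 1) ^ 4 + (p 2) ^ 4 = 0}
      (fun t : ℝ => p + (t : ℂ) • (q - p)) (17 * ‖p - q‖) (by positivity) ?_ ?_
    · simpa using this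
    · intro s t
      have : p + (s : ℂ) • (q - p) - (p + (t : ℂ) • (q - p)) = ((s - t : ℝ) : ℂ) • (q - p) := by
        push_cast
        module
      rw [this, norm_smul, Complex.norm_real, Real.norm_eq_abs, norm_sub_rev q p]
      nlinarith [mul_nonneg hD (abs_nonneg (s - t))]
    · intro t _
      simp only [Set.mem_ofPred_eq, PiLp.add_apply, PiLp.smul_apply, PiLp.sub_apply, smul_eq_mul]
      rw [hpw, hqv]
      linear_combination (p 2 + t * (q 2 - p 2)) ^ 4 * hw
  · have hu := norm_le_of_lines hw hv hwv hpw hqv (hi 1) (hi 2)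
    have hu' := norm_le_of_lines hv hw (Ne.symm hwv) hqv hpw
      ((norm_sub_rev _ _).trans_le (hi 1)) ((norm_sub_rev _ _).trans_le (hi 2))
    set a : EuclideanSpace ℂ (Fin 3) := !₂[p 0, 0, 0] with ha
    set b : EuclideanSpace ℂ (Fin 3) := !₂[q 0 - p 0, 0, 0] with hb
    set u : EuclideanSpace ℂ (Fin 3) := !₂[0, p 1, p 2] with hudef
    set u' : EuclideanSpace ℂ (Fin 3) := !₂[0, q 1, q 2] with hudef'
    have nb : ‖b‖ ≤ ‖p - q‖ := by
      refine (norm_le_sum_three b).trans ?_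
      simpa [hb, norm_sub_rev] using hi 0
    have nu' : ‖u'‖ ≤ 4 * ‖p - q‖ := by
      refine (norm_le_sum_three u').trans ?_
      simpa [hudef'] using hu'
    have nu : ‖u‖ ≤ 4 * ‖p - q‖ := by
      refine (norm_le_sum_three u).trans ?_
      simpa [hudef] using hu
    -- the path contracts `p` to the axis during `[0,1/2]` and expands to `q` during `[1/2,1]`,
    -- while the first coordinate moves at constant speed
    have := innerDist_le_of_lipschitz_s15 {p : EuclideanSpace ℂ (Fin 3) | (p 1) ^ 4 + (p 2) ^ 4 = 0}
      (fun t : ℝ => a + (t : ℂ) • b + ((max (1 - 2 * t) 0 : ℝ) : ℂ) • u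
        + ((max (2 * t - 1) 0 : ℝ) : ℂ) • u') (17 * ‖p - q‖) (by positivity) ?_ ?_
    · have e0 : a + ((0 : ℝ) : ℂ) • b + ((max (1 - 2 * 0) 0 : ℝ) : ℂ) • u
        + ((max (2 * 0 - 1) 0 : ℝ) : ℂ) • u' = p := by
        ext i
        fin_cases i <;> simp [ha, hb, hudef, hudef']
      have e1 : a + ((1 : ℝ) : ℂ) • b + ((max (1 - 2 * 1) 0 : ℝ) : ℂ) • u
        + ((max (2 * 1 - 1) 0 : ℝ) : ℂ) • u' = q := by
        have h1 : max ((1 : ℝ) - 2 * 1) 0 = 0 := by norm_num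
        have h2 : max ((2 : ℝ) * 1 - 1) 0 = 1 := by norm_num
        rw [h1, h2]
        ext i
        fin_cases i <;> simp [ha, hb, hudef, hudef']
      simp only [e0, e1] at this
      exact this
    · intro s t
      have e : a + (s : ℂ) • b + ((max (1 - 2 * s) 0 : ℝ) : ℂ) • u
          + ((max (2 * s - 1) 0 : ℝ) : ℂ) • u' -
          (a + (t : ℂ) • b + ((max (1 - 2 * t) 0 : ℝ) : ℂ) • u
          + ((max (2 * t - 1) 0 : ℝ) : ℂ) • u')
          = ((s - t : ℝ) : ℂ) • b
            + ((max (1 - 2 * s) 0 - max (1 - 2 * t) 0 : ℝ) : ℂ) • u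
            + ((max (2 * s - 1) 0 - max (2 * t - 1) 0 : ℝ) : ℂ) • u' := by
        rw [Complex.ofReal_sub, Complex.ofReal_sub, Complex.ofReal_sub]
        module
      have m1 : |max (1 - 2 * s) 0 - max (1 - 2 * t) 0| ≤ 2 * |s - t| := by
        refine (abs_max_sub_max_le_abs _ _ _).trans_eq ?_
        rw [show 1 - 2 * s - (1 - 2 * t) = -(2 * (s - t)) by ring, abs_neg, abs_mul]
        norm_num
      have m2 : |max (2 * s - 1) 0 - max (2 * t - 1) 0| ≤ 2 * |s - t| := by
        refine (abs_max_sub_max_le_abs _ _ _).trans_eq ?_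
        rw [show 2 * s - 1 - (2 * t - 1) = 2 * (s - t) by ring, abs_mul]
        norm_num
      simp only [e]
      refine norm_add₃_le.trans ?_
      simp only [norm_smul, Complex.norm_real, Real.norm_eq_abs]
      calc _ ≤ |s - t| * ‖p - q‖ + 2 * |s - t| * (4 * ‖p - q‖) + 2 * |s - t| * (4 * ‖p - q‖) := by
            gcongr
        _ = _ := by ring
    · intro t _
      simp only [Set.mem_ofPred_eq, PiLp.add_apply, PiLp.smul_apply, smul_eq_mul, ha, hb, hudef,
        hudef']
      rcases le_total (2 * t) 1 with h | h
      · rw [max_eq_right (by linarith : 2 * t - 1 ≤ 0)]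
        simp only [Matrix.cons_val, Complex.ofReal_zero]
        linear_combination ((max (1 - 2 * t) 0 : ℝ) : ℂ) ^ 4 * hp4
      · rw [max_eq_right (by linarith : 1 - 2 * t ≤ 0)]
        simp only [Matrix.cons_val, Complex.ofReal_zero]
        linear_combination ((max (2 * t - 1) 0 : ℝ) : ℂ) ^ 4 * hq4

/-! ### Failure of the Lipschitz normal embedding -/

/-- In the coordinates `x = s⁴ X`, `y = s¹⁰ Y`, `z = s¹⁰ Z` the equation of `X` becomes
`X² (Y+2Z) (Y+3Z)² = -s² (Y⁴ + Z⁴ + s⁴ (X + s⁶ (Y+Z))¹¹)`. Near `(1, -3, 1)` the factor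
`X² (Y+2Z)` is close to `-1` and the bracket is close to `82`. -/
lemma signs_near : ∃ ε > 0, ∀ (X Y Z : ℂ) (s : ℝ), ‖X - 1‖ < ε → ‖Y - (-3)‖ < ε → ‖Z - 1‖ < ε →
    |s| < ε → (X ^ 2 * (Y + 2 * Z)).re < 0 ∧
      0 < (Y ^ 4 + Z ^ 4 + (s : ℂ) ^ 4 * (X + (s : ℂ) ^ 6 * (Y + Z)) ^ 11).re := by
  have h1 : Continuous fun p : ℂ × ℂ × ℂ × ℝ => (p.1 ^ 2 * (p.2.1 + 2 * p.2.2.1)).re := by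
    fun_prop
  have h2 : Continuous fun p : ℂ × ℂ × ℂ × ℝ => (p.2.1 ^ 4 + p.2.2.1 ^ 4
      + (p.2.2.2 : ℂ) ^ 4 * (p.1 + (p.2.2.2 : ℂ) ^ 6 * (p.2.1 + p.2.2.1)) ^ 11).re := by
    fun_prop
  have e1 := h1.continuousAt.eventually_lt (continuousAt_const (y := (0 : ℝ)))
    (x₀ := ((1 : ℂ), (-3 : ℂ), (1 : ℂ), (0 : ℝ))) (by norm_num)
  have e2 := (continuousAt_const (y := (0 : ℝ))).eventually_lt h2.continuousAt
    (x₀ := ((1 : ℂ), (-3 : ℂ), (1 : ℂ), (0 : ℝ))) (by norm_num)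
  obtain ⟨ε, hε, h⟩ := Metric.eventually_nhds_iff.1 (e1.and e2)
  refine ⟨ε, hε, fun X Y Z s hX hY hZ hs => h (y := (X, Y, Z, s)) ?_⟩
  rw [← Real.dist_0_eq_abs] at hs
  rw [← dist_eq_norm] at hX hY hZ
  exact max_lt hX (max_lt hY (max_lt hZ hs))

/-- The value of the polynomial at `(s⁴, s¹⁰ (-3 + s ω), s¹⁰)`, divided by `s⁴⁰`. -/
noncomputable def arcValue (s ω : ℝ) : ℝ :=
  (-3 + s * ω) ^ 4 + 1 + (-1 + s * ω) * ω ^ 2 + s ^ 4 * (1 + s ^ 6 * (-2 + s * ω)) ^ 11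

/-- At `s = 0` the function `arcValue` is `82 - ω²`, which changes sign on `[-10,0]` and on
`[0,10]`. -/
lemma arcValue_signs : ∀ᶠ s in nhds (0 : ℝ),
    0 < arcValue s 0 ∧ arcValue s 10 < 0 ∧ arcValue s (-10) < 0 := by
  have hc : ∀ ω, Continuous fun s => arcValue s ω := fun ω => by unfold arcValue; fun_prop
  refine ((continuousAt_const (y := (0 : ℝ))).eventually_lt (hc 0).continuousAt ?_).and
    (((hc 10).continuousAt.eventually_lt (continuousAt_const (y := (0 : ℝ))) ?_).and
    ((hc (-10)).continuousAt.eventually_lt (continuousAt_const (y := (0 : ℝ))) ?_))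
  all_goals norm_num [arcValue]

lemma arcValue_roots {s : ℝ}
    (h : 0 < arcValue s 0 ∧ arcValue s 10 < 0 ∧ arcValue s (-10) < 0) :
    (∃ ω, 0 < ω ∧ ω ≤ 10 ∧ arcValue s ω = 0) ∧ (∃ ω, ω < 0 ∧ -10 ≤ ω ∧ arcValue s ω = 0) := by
  have hc : Continuous fun ω => arcValue s ω := by unfold arcValue; fun_prop
  constructor
  · obtain ⟨ω, hω, h0⟩ := intermediate_value_Icc' (by norm_num : (0 : ℝ) ≤ 10) hc.continuousOn
      ⟨h.2.1.le, h.1.le⟩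
    refine ⟨ω, lt_of_le_of_ne hω.1 ?_, hω.2, h0⟩
    rintro rfl
    exact h.1.ne' h0
  · obtain ⟨ω, hω, h0⟩ := intermediate_value_Icc (by norm_num : (-10 : ℝ) ≤ 0) hc.continuousOn
      ⟨h.2.2.le, h.1.le⟩
    refine ⟨ω, lt_of_le_of_ne hω.2 ?_, hω.1, h0⟩
    rintro rfl
    exact h.1.ne' h0

/-- The point `(s⁴, s¹⁰ (-3 + s ω), s¹⁰)`. -/
noncomputable def arcPoint (s ω : ℝ) : EuclideanSpace ℂ (Fin 3) :=
  !₂[(s : ℂ) ^ 4, (s : ℂ) ^ 10 * (-3 + s * ω), (s : ℂ) ^ 10]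

lemma norm_arcPoint_le {s ω : ℝ} (hs : 0 < s) (hs1 : s ≤ 1) (hω : |ω| ≤ 10) :
    ‖arcPoint s ω‖ ≤ 15 * s := by
  refine (norm_le_sum_three _).trans ?_
  have h : ‖(-3 + s * ω : ℂ)‖ ≤ 13 := by
    refine (norm_add_le _ _).trans ?_
    rw [norm_mul, Complex.norm_real, Complex.norm_real, Real.norm_eq_abs, Real.norm_eq_abs,
      abs_of_pos hs, norm_neg]
    have : s * |ω| ≤ 1 * 10 := by gcongr
    norm_num
    linarith
  have h4 : s ^ 4 ≤ s := pow_le_of_le_one hs.le hs1 (by norm_num)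
  have h10 : s ^ 10 ≤ s := pow_le_of_le_one hs.le hs1 (by norm_num)
  simp only [arcPoint, Matrix.cons_val, norm_mul, norm_pow, Complex.norm_real,
    Real.norm_eq_abs, abs_of_pos hs]
  have : s ^ 10 * ‖(-3 + s * ω : ℂ)‖ ≤ s * 13 := by gcongr
  linarith

lemma norm_arcPoint_sub_le {s ω ω' : ℝ} (hs : 0 < s) (hω : |ω| ≤ 10) (hω' : |ω'| ≤ 10) :
    ‖arcPoint s ω - arcPoint s ω'‖ ≤ 20 * s ^ 11 := by
  refine (norm_le_sum_three _).trans ?_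
  simp only [arcPoint, PiLp.sub_apply, Matrix.cons_val, sub_self, norm_zero, zero_add, add_zero]
  have e : (s : ℂ) ^ 10 * (-3 + s * ω) - (s : ℂ) ^ 10 * (-3 + s * ω')
      = ((s ^ 11 * (ω - ω') : ℝ) : ℂ) := by push_cast; ring
  rw [e, Complex.norm_real, Real.norm_eq_abs, abs_mul, abs_of_pos (pow_pos hs 11)]
  have : |ω - ω'| ≤ 20 := (abs_sub _ _).trans (by linarith)
  nlinarith [pow_pos hs 11]

lemma not_isLNE (f : EuclideanSpace ℂ (Fin 3) → ℂ)
    (hf : ∀ p, f p = (p 1) ^ 4 + (p 2) ^ 4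
        + (p 0) ^ 2 * (p 1 + 2 * p 2) * (p 1 + 3 * p 2) ^ 2
        + (p 0 + p 1 + p 2) ^ 11)
    (U : Set (EuclideanSpace ℂ (Fin 3))) (hU : U ∈ nhds 0) :
    ¬ IsLNE ({q : EuclideanSpace ℂ (Fin 3) | f q = 0} ∩ U) := by
  rintro ⟨K, hK1, hK⟩
  obtain ⟨δ, hδ, hδU⟩ := Metric.mem_nhds_iff.1 hU
  obtain ⟨ε, hε, hsign⟩ := signs_near
  have hlt : ∀ c : ℝ, 0 < c → ∀ᶠ s in nhdsWithin (0 : ℝ) (Set.Ioi 0), s < c := fun c hc =>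
    nhdsWithin_le_nhds (eventually_lt_nhds hc)
  obtain ⟨s, hs0, hs1, hsδ, hsε, hsε', hsK, hroots⟩ :=
    (eventually_mem_nhdsWithin.and <| (hlt 1 one_pos).and <| (hlt (δ / 15) (by positivity)).and <|
      (hlt ε hε).and <| (hlt (ε / 20) (by positivity)).and <|
      (hlt (ε / (40 * K)) (by positivity)).and
      (nhdsWithin_le_nhds arcValue_signs)).exists
  rw [Set.mem_Ioi] at hs0
  obtain ⟨⟨ω, hω0, hω10, hω⟩, ⟨ω', hω0', hω10', hω'⟩⟩ := arcValue_roots hroots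
  have habs : |ω| ≤ 10 := abs_le.2 ⟨by linarith, hω10⟩
  have habs' : |ω'| ≤ 10 := abs_le.2 ⟨hω10', by linarith⟩
  have hmem : ∀ τ : ℝ, |τ| ≤ 10 → arcValue s τ = 0 →
      arcPoint s τ ∈ {q : EuclideanSpace ℂ (Fin 3) | f q = 0} ∩ U := by
    intro τ hτ h
    refine ⟨?_, hδU ?_⟩
    · have e : f (arcPoint s τ) = ((s ^ 40 * arcValue s τ : ℝ) : ℂ) := by
        rw [hf]
        simp only [arcPoint, arcValue, Matrix.cons_val]
        push_cast
        ring
      rw [Set.mem_ofPred_eq, e, h]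
      simp
    · rw [mem_ball_zero_iff]
      have := norm_arcPoint_le hs0 hs1.le hτ
      linarith
  have hd := hK _ (hmem ω habs hω) _ (hmem ω' habs' hω')
  have hd2 : innerDist ({q : EuclideanSpace ℂ (Fin 3) | f q = 0} ∩ U) (arcPoint s ω)
      (arcPoint s ω') < ENNReal.ofReal (ε / 2 * s ^ 10) := by
    refine hd.trans_lt ((ENNReal.ofReal_lt_ofReal_iff (by positivity)).2 ?_)
    have h1 := norm_arcPoint_sub_le hs0 habs habs'
    have h2 : s * (40 * K) < ε := (lt_div_iff₀ (by positivity)).1 hsK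
    calc K * ‖arcPoint s ω - arcPoint s ω'‖ ≤ K * (20 * s ^ 11) := by gcongr
      _ = (s * (40 * K)) / 2 * s ^ 10 := by ring
      _ < ε / 2 * s ^ 10 := by gcongr
  simp only [innerDist, iInf_lt_iff] at hd2
  obtain ⟨γ, hγc, hγX, hγ0, hγ1, hγv⟩ := hd2
  -- the real part of `y + 3z` changes sign along the path
  have hci : ∀ i, ContinuousOn (fun t => γ t i) (Set.Icc 0 1) := fun i =>
    (EuclideanSpace.proj (𝕜 := ℂ) i).continuous.comp_continuousOn hγc
  have hφc : ContinuousOn (fun t => (γ t 1 + 3 * γ t 2).re) (Set.Icc 0 1) :=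
    Complex.continuous_re.comp_continuousOn ((hci 1).add (continuousOn_const.mul (hci 2)))
  have hend : ∀ τ : ℝ, (arcPoint s τ 1 + 3 * arcPoint s τ 2).re = s ^ 11 * τ := by
    intro τ
    have : arcPoint s τ 1 + 3 * arcPoint s τ 2 = ((s ^ 11 * τ : ℝ) : ℂ) := by
      simp only [arcPoint, Matrix.cons_val]
      push_cast
      ring
    rw [this, Complex.ofReal_re]
  obtain ⟨t, ht, hre⟩ := intermediate_value_Icc' zero_le_one hφc
    (show (0 : ℝ) ∈ _ from ⟨by
      rw [hγ1, hend]; exact mul_nonpos_of_nonneg_of_nonpos (by positivity) hω0'.le, by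
      rw [hγ0, hend]; positivity⟩)
  have hclose : ‖γ t - arcPoint s ω‖ < ε / 2 * s ^ 10 := by
    have h1 := (eVariationOn.edist_le γ ht (Set.left_mem_Icc.2 zero_le_one)).trans_lt hγv
    rw [hγ0, edist_dist, ENNReal.ofReal_lt_ofReal_iff (by positivity), dist_eq_norm] at h1
    exact h1
  have hsC : (s : ℂ) ≠ 0 := by exact_mod_cast hs0.ne'
  have hcl : ∀ i, ‖γ t i - arcPoint s ω i‖ < ε / 2 * s ^ 10 := fun i =>
    (PiLp.norm_apply_le (γ t - arcPoint s ω) i).trans_lt hclose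
  -- the rescaled coordinates of `γ t`
  obtain ⟨X, hX⟩ : ∃ X, γ t 0 = (s : ℂ) ^ 4 * X := ⟨γ t 0 / (s : ℂ) ^ 4, by field_simp⟩
  obtain ⟨Y, hY⟩ : ∃ Y, γ t 1 = (s : ℂ) ^ 10 * Y := ⟨γ t 1 / (s : ℂ) ^ 10, by field_simp⟩
  obtain ⟨Z, hZ⟩ : ∃ Z, γ t 2 = (s : ℂ) ^ 10 * Z := ⟨γ t 2 / (s : ℂ) ^ 10, by field_simp⟩
  have c0 := hcl 0
  have c1 := hcl 1
  have c2 := hcl 2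
  simp only [arcPoint, Matrix.cons_val, hX, hY, hZ] at c0 c1 c2
  have p10 : 0 < s ^ 10 := by positivity
  have p4 : 0 < s ^ 4 := by positivity
  have d0 : ‖X - 1‖ < ε := by
    rw [show (s : ℂ) ^ 4 * X - (s : ℂ) ^ 4 = (s : ℂ) ^ 4 * (X - 1) by ring, norm_mul, norm_pow,
      Complex.norm_real, Real.norm_eq_abs, abs_of_pos hs0] at c0
    have h6 : s ^ 6 ≤ 1 := pow_le_one₀ hs0.le hs1.le
    refine lt_of_mul_lt_mul_left (c0.trans ?_) p4.le
    calc ε / 2 * s ^ 10 = s ^ 4 * (ε / 2 * s ^ 6) := by ring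
      _ < s ^ 4 * ε := by
        gcongr
        nlinarith
  have d1 : ‖Y - (-3)‖ < ε := by
    rw [← mul_sub, norm_mul, norm_pow,
      Complex.norm_real, Real.norm_eq_abs, abs_of_pos hs0, mul_comm (ε / 2)] at c1
    have h1 : ‖Y - (-3 + s * ω)‖ < ε / 2 := lt_of_mul_lt_mul_left c1 p10.le
    have h2 : ‖((s * ω : ℝ) : ℂ)‖ ≤ s * 10 := by
      rw [Complex.norm_real, Real.norm_eq_abs, abs_mul, abs_of_pos hs0]
      gcongr
    have h3 : Y - (-3) = (Y - (-3 + s * ω)) + ((s * ω : ℝ) : ℂ) := by push_cast; ring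
    rw [h3]
    exact (norm_add_le _ _).trans_lt (by linarith)
  have d2 : ‖Z - 1‖ < ε := by
    rw [show (s : ℂ) ^ 10 * Z - (s : ℂ) ^ 10 = (s : ℂ) ^ 10 * (Z - 1) by ring, norm_mul, norm_pow,
      Complex.norm_real, Real.norm_eq_abs, abs_of_pos hs0, mul_comm (ε / 2)] at c2
    have h1 : ‖Z - 1‖ < ε / 2 := lt_of_mul_lt_mul_left c2 p10.le
    linarith
  obtain ⟨hA, hB⟩ := hsign X Y Z s d0 d1 d2 (by rwa [abs_of_pos hs0])
  -- `Y + 3Z` is purely imaginary at this point, so its square is a nonpositive real number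
  have hW : (Y + 3 * Z).re = 0 := by
    have h1 : γ t 1 + 3 * γ t 2 = ((s ^ 10 : ℝ) : ℂ) * (Y + 3 * Z) := by
      rw [hY, hZ]; push_cast; ring
    simp only [h1, Complex.re_ofReal_mul] at hre
    exact (mul_eq_zero.1 hre).resolve_left p10.ne'
  have hW2 : (Y + 3 * Z) ^ 2 = ((-(Y + 3 * Z).im ^ 2 : ℝ) : ℂ) := by
    generalize Y + 3 * Z = W at hW
    apply Complex.ext
    · simp [pow_two, Complex.mul_re, hW]
    · rw [Complex.ofReal_im, pow_two, Complex.mul_im, hW]; ring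
  have hzero : f (γ t) = 0 := (hγX ht).1
  rw [hf, hX, hY, hZ] at hzero
  have heq : ((s ^ 2 : ℝ) : ℂ) *
      (Y ^ 4 + Z ^ 4 + (s : ℂ) ^ 4 * (X + (s : ℂ) ^ 6 * (Y + Z)) ^ 11)
      = (((Y + 3 * Z).im ^ 2 : ℝ) : ℂ) * (X ^ 2 * (Y + 2 * Z)) := by
    apply mul_left_cancel₀ (pow_ne_zero 38 hsC)
    push_cast at hW2 ⊢
    linear_combination hzero - (s : ℂ) ^ 38 * X ^ 2 * (Y + 2 * Z) * hW2
  have hre2 := congrArg Complex.re heq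
  rw [Complex.re_ofReal_mul, Complex.re_ofReal_mul] at hre2
  have q1 := mul_pos (pow_pos hs0 2) hB
  have q2 := mul_nonpos_of_nonneg_of_nonpos (sq_nonneg (Y + 3 * Z).im) hA.le
  linarith

theorem stmt15 (f : EuclideanSpace ℂ (Fin 3) → ℂ)
    (hf : ∀ p, f p = (p 1) ^ 4 + (p 2) ^ 4
        + (p 0) ^ 2 * (p 1 + 2 * p 2) * (p 1 + 3 * p 2) ^ 2
        + (p 0 + p 1 + p 2) ^ 11) :
    -- (i) `X = {f = 0}` has an isolated singularity at the origin
    (∃ U ∈ nhds (0 : EuclideanSpace ℂ (Fin 3)),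
        ∀ p ∈ {q : EuclideanSpace ℂ (Fin 3) | f q = 0} ∩ U,
          fderiv ℂ f p = 0 → p = 0) ∧
    -- (ii) the tangent cone of `X` at the origin is LNE
    IsLNE {p : EuclideanSpace ℂ (Fin 3) | (p 1) ^ 4 + (p 2) ^ 4 = 0} ∧
    -- (iii) the germ of `X` at the origin is not LNE
    (∀ U ∈ nhds (0 : EuclideanSpace ℂ (Fin 3)),
        ¬ IsLNE ({q : EuclideanSpace ℂ (Fin 3) | f q = 0} ∩ U)) := by
  exact ⟨isolated f hf, cone_isLNE, not_isLNE f hf⟩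
end
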